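/- arXiv:1801.04591 — 2 statements merged into one kernel-verified Lean document; each statement's English description precedes it below -/
import Mathlib

section
/- For every ε ∈ (0,1) there exist an integer m ≥ 1 and coefficients λ_1,…,λ_{2^m−1} ≥ 0, not all zero, with λ_{2^j} = … = λ_{2^{j+1}−1} for every 0 ≤ j ≤ m−1, such that, setting φ := Σ_{k=1}^{2^m−1} λ_k φ_k, the following holds: for every integrable right-continuous u : ℝ → ℝ and every family (u_δ)_{δ>0} of measurable functions with u_δ → u in L¹(ℝ) as δ → 0⁺, one has liminf_{δ→0⁺} Λ_{δ,1}(φ,u_δ,ℝ) ≥ (1−ε) · 2 · N(φ) · TV(u). -/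
/-!
The laws `φ_n + ⋯ + φ_{2n-1}` with `n = 2 ^ M` are almost optimal as `n → ∞`. Their scale factor
is `∑_{n ≤ k < 2n} 1 / k ≤ log 2 + 1 / n`, so it suffices to prove that the liminf is at least
`2 log 2 · TV(u)` for every `n` (`liminf_lower`).

*Reduction to integer levels.* For each offset `i < n` the values of `U δ` are quantised in groups
of `n` levels of height `δ`, by `s ↦ ⌊(s / δ + i) / n⌋`. If `|s - t| / δ` exceeds exactly `c` of
the integers `n, …, 2n - 1`, then at most `c` of the `n` offsets put `s` and `t` two or more groups
apart (`count_offsets`). Hence the energy of the law is at least the sum over the offsets of `δ`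
times the energy of the pairs of points whose coarse levels are *hostile*, i.e. differ by at least
two, with the kernel `1 / (y - x) ^ 2`.

*One offset on one interval.* Take an interval near whose ends `u` is close to `A` and `B`; the
coarse levels then climb through about `K = |B - A| / (n δ)` values, and the claim is that the
energy of hostile pairs is at least about `2 K log 2` (`farEnergy_lower`). For sequences this is a
rearrangement argument: sorting a finite sequence does not increase the number of hostile pairs at
distance at most `r` (`sortedCount_le_hostCount`, by removing a maximal entry), so one may replace
the sequence by its nondecreasing rearrangement for any nonincreasing weight of the distance
(`sorted_weight_le`). With the telescoping weight `wt`, consecutive blocks of lengths `b` and `a`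
contribute about `log ((a + b) / b) ≥ log 2 + (log a - log b) / 2`, and the corrections telescope
(`energy_lower`).

*From sequences to functions.* The discrete bound is applied to samples on grids of step `h`, and
integrated over the position of the grid (`sample_step`) and over `h` with respect to `dh / h`
on `(h₁, h₂)`. Since `∑_d d · wt d` diverges like a logarithm, the averaged kernel is at most
`(log (h₂ / h₁) + O(1)) / r ^ 2` (`tsum_kernel_le`); dividing by `log (h₂ / h₁)` and letting
`h₁ → 0` removes the bounded error without any loss in the constant (`halfEnergy_lower`).

*Assembly.* Right continuity of `u` provides, to the right of each point `x_q` of a partition, a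
window on which `u` is close to `u x_q`; by Markov's inequality `U δ` is close to `u` there up to a
set of small measure. Summing over the intervals that join consecutive windows, and taking the
supremum over the partitions, gives the total variation.
-/

open MeasureTheory Filter Set Topology ENNReal

/-- The functional `Λ_{δ,p}(φ,u,Ω)` in dimension one. -/
noncomputable def Lambda1 (φ : ℝ → ℝ) (p δ : ℝ) (u : ℝ → ℝ) (Ω : Set ℝ) : ℝ≥0∞ :=
  ∫⁻ x in Ω, ∫⁻ y in Ω, ENNReal.ofReal (φ (|u y - u x| / δ) * δ ^ p / |y - x| ^ (1 + p))

/-- The interaction law `φ_k`. -/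
noncomputable def phik (k t : ℝ) : ℝ := if t ≤ k then 0 else 1

/-- The scale factor `N(φ) = ∫_0^∞ φ(t)/t² dt`. -/
noncomputable def Nconst (φ : ℝ → ℝ) : ℝ := ∫ t in Set.Ioi (0 : ℝ), φ t / t ^ 2

/-! ### Sorting reduces the number of hostile pairs -/

/-- Two levels are hostile when they differ by at least two. -/
def Hostile (a b : ℕ) : Prop := a + 2 ≤ b ∨ b + 2 ≤ a

instance (a b : ℕ) : Decidable (Hostile a b) := by unfold Hostile; infer_instance

lemma Hostile.symm {a b : ℕ} (h : Hostile a b) : Hostile b a := Or.symm h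

/-- The number of hostile pairs at distance at most `r` in the finite sequence
`s 0, …, s (n - 1)`. -/
def hostCount (r n : ℕ) (s : ℕ → ℕ) : ℕ :=
  ∑ i ∈ Finset.range n, ∑ j ∈ Finset.range n,
    if i < j ∧ j ≤ i + r ∧ Hostile (s i) (s j) then 1 else 0

/-- The number of entries of `s 0, …, s (n - 1)` equal to `j`. -/
def cnt (n : ℕ) (s : ℕ → ℕ) (j : ℕ) : ℕ := ∑ i ∈ Finset.range n, if s i = j then 1 else 0

/-- The number of entries of `s 0, …, s (n - 1)` equal to `j - 1` (none for `j = 0`). -/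
def cntPred (n : ℕ) (s : ℕ → ℕ) (j : ℕ) : ℕ :=
  ∑ i ∈ Finset.range n, if s i + 1 = j then 1 else 0

/-- The number of entries of `s 0, …, s (n - 1)` below `j`. -/
def cntLt (n : ℕ) (s : ℕ → ℕ) (j : ℕ) : ℕ := ∑ i ∈ Finset.range n, if s i < j then 1 else 0

/-- The number of hostile pairs at distance at most `r` in the nondecreasing rearrangement of
`s 0, …, s (n - 1)`, when the values are at most `K`. The entry of value `j` that is preceded by
`x` entries of the same value has `cntLt j + x` predecessors, the last `cntPred j + x` of which
are not hostile to it. -/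
def sortedCount (K r n : ℕ) (s : ℕ → ℕ) : ℕ :=
  ∑ j ∈ Finset.range (K + 1), ∑ x ∈ Finset.range (cnt n s j),
    (min r (cntLt n s j + x) - (cntPred n s j + x))

/-- The increasing enumeration of `ℕ \ {p}`. -/
def skip (p i : ℕ) : ℕ := if i < p then i else i + 1

lemma sum_range_skip {M : Type*} [AddCommMonoid M] (f : ℕ → M) {n p : ℕ} (hp : p ≤ n) :
    ∑ i ∈ Finset.range (n + 1), f i = f p + ∑ i ∈ Finset.range n, f (skip p i) := by
  rw [Finset.sum_range, Fin.sum_univ_succAbove _ (⟨p, by omega⟩ : Fin (n + 1)), Finset.sum_range]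
  congr 1
  refine Finset.sum_congr rfl fun i _ => ?_
  congr 1
  unfold skip Fin.succAbove
  simp only [Fin.lt_def]
  split_ifs <;> simp_all

/-- Reindexing of the left half of a window of radius `r` around `p` by `j = i + r`. -/
lemma sum_left_window (r n p : ℕ) (hp : p ≤ n) (P : ℕ → Prop) [DecidablePred P] :
    ∑ i ∈ Finset.range n, (if i < p ∧ p ≤ i + r ∧ P i then 1 else 0)
      = ∑ j ∈ Finset.Ico p (p + r), (if r ≤ j ∧ P (j - r) then 1 else 0) := by
  rw [← Finset.card_filter, ← Finset.card_filter]
  refine Finset.card_bij (fun i _ => i + r) ?_ ?_ ?_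
  · intro i hi
    simp only [Finset.mem_filter, Finset.mem_range, Finset.mem_Ico] at hi ⊢
    refine ⟨by omega, by omega, ?_⟩
    rw [Nat.add_sub_cancel]; exact hi.2.2.2
  · intro i _ j _ h; simpa using h
  · intro j hj
    simp only [Finset.mem_filter, Finset.mem_Ico] at hj
    refine ⟨j - r, ?_, by omega⟩
    simp only [Finset.mem_filter, Finset.mem_range]
    exact ⟨by omega, by omega, by omega, hj.2.2⟩

lemma sum_right_window (r n p : ℕ) (P : ℕ → Prop) [DecidablePred P] :
    ∑ j ∈ Finset.range n, (if p ≤ j ∧ j < p + r ∧ P j then 1 else 0)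
      = ∑ j ∈ Finset.Ico p (p + r), (if j < n ∧ P j then 1 else 0) := by
  rw [← Finset.card_filter, ← Finset.card_filter]
  congr 1
  ext j
  simp only [Finset.mem_filter, Finset.mem_range, Finset.mem_Ico]
  tauto

lemma window_card (r n p : ℕ) (hp : p ≤ n) :
    min r n ≤ ∑ j ∈ Finset.Ico p (p + r), (if r ≤ j ∨ j < n then 1 else 0) := by
  rw [← Finset.card_filter]
  rcases le_total r n with h | h
  · rw [Finset.filter_true_of_mem (fun j hj => by simp at hj; omega)]
    simp [h]
  · have : Finset.Ico p n ∪ Finset.Ico r (p + r) ⊆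
        (Finset.Ico p (p + r)).filter (fun j => r ≤ j ∨ j < n) := by
      intro j hj
      simp only [Finset.mem_union, Finset.mem_filter, Finset.mem_Ico] at hj ⊢
      omega
    refine le_trans ?_ (Finset.card_le_card this)
    rw [Finset.card_union_of_disjoint]
    · simp; omega
    · rw [Finset.disjoint_left]; intro j; simp; omega

/-- Removing an entry of maximal value `M` at position `p` destroys the hostile pairs formed with
it and creates those pairs whose distance drops from `r + 1` to `r`. The entries at positions
`j - r` and `j` on the two sides are paired with each other, and in each pair the balance is
favourable. -/
lemma removal_balance (r n p M : ℕ) (hp : p ≤ n) (s : ℕ → ℕ) (hM : ∀ i < n, s i ≤ M) :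
    (min r n - ∑ i ∈ Finset.range n, (if M ≤ s i + 1 then 1 else 0))
      + ∑ i ∈ Finset.range n,
          (if i < p ∧ p ≤ i + r ∧ (i + r < n ∧ Hostile (s i) (s (i + r))) then 1 else 0)
    ≤ ∑ i ∈ Finset.range n, (if i < p ∧ p ≤ i + r ∧ s i + 2 ≤ M then 1 else 0)
      + ∑ j ∈ Finset.range n, (if p ≤ j ∧ j < p + r ∧ s j + 2 ≤ M then 1 else 0) := by
  have hF : ∑ i ∈ Finset.range n, (if i < p ∧ p ≤ i + r ∧ M ≤ s i + 1 then 1 else 0)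
      + ∑ j ∈ Finset.range n, (if p ≤ j ∧ j < p + r ∧ M ≤ s j + 1 then 1 else 0)
      ≤ ∑ i ∈ Finset.range n, (if M ≤ s i + 1 then 1 else 0) := by
    rw [← Finset.sum_add_distrib]
    refine Finset.sum_le_sum fun i _ => ?_
    split_ifs <;> omega
  have hw := window_card r n p hp
  rw [sum_left_window r n p hp, sum_right_window r n p] at hF ⊢
  rw [sum_left_window r n p hp]
  have h1 : ∑ j ∈ Finset.Ico p (p + r), (if r ≤ j ∨ j < n then 1 else 0)
      + ∑ j ∈ Finset.Ico p (p + r), (if r ≤ j ∧ (j - r + r < n ∧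
          Hostile (s (j - r)) (s (j - r + r))) then 1 else 0)
      ≤ (∑ j ∈ Finset.Ico p (p + r), (if r ≤ j ∧ s (j - r) + 2 ≤ M then 1 else 0)
      + ∑ j ∈ Finset.Ico p (p + r), (if j < n ∧ s j + 2 ≤ M then 1 else 0))
      + (∑ j ∈ Finset.Ico p (p + r), (if r ≤ j ∧ M ≤ s (j - r) + 1 then 1 else 0)
      + ∑ j ∈ Finset.Ico p (p + r), (if j < n ∧ M ≤ s j + 1 then 1 else 0)) := by
    simp only [← Finset.sum_add_distrib]
    refine Finset.sum_le_sum fun j hj => ?_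
    rw [Finset.mem_Ico] at hj
    unfold Hostile
    by_cases hr : r ≤ j
    · rw [Nat.sub_add_cancel hr]
      have := hM (j - r) (by omega)
      by_cases hn : j < n
      · have := hM j hn
        split_ifs <;> omega
      · split_ifs <;> omega
    · split_ifs <;> omega
  have h2 : ∑ j ∈ Finset.Ico p (p + r), (if r ≤ j ∧ (j - r + r < n ∧
          Hostile (s (j - r)) (s (j - r + r))) then 1 else 0)
      ≤ ∑ j ∈ Finset.Ico p (p + r), (if r ≤ j ∧ s (j - r) + 2 ≤ M then 1 else 0)
      + ∑ j ∈ Finset.Ico p (p + r), (if j < n ∧ s j + 2 ≤ M then 1 else 0) := by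
    simp only [← Finset.sum_add_distrib]
    refine Finset.sum_le_sum fun j hj => ?_
    rw [Finset.mem_Ico] at hj
    unfold Hostile
    by_cases hr : r ≤ j
    · rw [Nat.sub_add_cancel hr]
      have := hM (j - r) (by omega)
      by_cases hn : j < n
      · have := hM j hn
        split_ifs <;> omega
      · split_ifs <;> omega
    · split_ifs <;> omega
  omega

lemma hostCount_skip (r n p : ℕ) (hp : p ≤ n) (s : ℕ → ℕ) (hM : ∀ i < n, s (skip p i) ≤ s p) :
    hostCount r n (fun i => s (skip p i))
      + (∑ i ∈ Finset.range n, (if i < p ∧ p ≤ i + r ∧ s (skip p i) + 2 ≤ s p then 1 else 0)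
      + ∑ j ∈ Finset.range n, (if p ≤ j ∧ j < p + r ∧ s (skip p j) + 2 ≤ s p then 1 else 0))
    ≤ hostCount r (n + 1) s + ∑ i ∈ Finset.range n,
          (if i < p ∧ p ≤ i + r ∧ (i + r < n ∧
            Hostile (s (skip p i)) (s (skip p (i + r)))) then 1 else 0) := by
  have e1 : hostCount r (n + 1) s =
      ∑ j ∈ Finset.range n, (if p ≤ j ∧ j < p + r ∧ s (skip p j) + 2 ≤ s p then 1 else 0)
      + (∑ i ∈ Finset.range n, (if i < p ∧ p ≤ i + r ∧ s (skip p i) + 2 ≤ s p then 1 else 0)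
      + ∑ i ∈ Finset.range n, ∑ j ∈ Finset.range n,
        (if skip p i < skip p j ∧ skip p j ≤ skip p i + r ∧
          Hostile (s (skip p i)) (s (skip p j)) then 1 else 0)) := by
    unfold hostCount
    rw [sum_range_skip _ hp, sum_range_skip _ hp, ← Finset.sum_add_distrib]
    simp only [lt_irrefl, false_and, if_false, zero_add]
    congr 1
    · refine Finset.sum_congr rfl fun j hj => ?_
      have := hM j (Finset.mem_range.1 hj)
      refine if_congr ?_ rfl rfl
      generalize s (skip p j) = t at *
      unfold Hostile skip
      split_ifs <;> omega
    · refine Finset.sum_congr rfl fun i hi => ?_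
      rw [sum_range_skip _ hp]
      congr 1
      have := hM i (Finset.mem_range.1 hi)
      refine if_congr ?_ rfl rfl
      generalize s (skip p i) = t at *
      unfold Hostile skip
      split_ifs <;> omega
  have e2 : hostCount r n (fun i => s (skip p i)) ≤
      ∑ i ∈ Finset.range n, ∑ j ∈ Finset.range n,
        (if skip p i < skip p j ∧ skip p j ≤ skip p i + r ∧
          Hostile (s (skip p i)) (s (skip p j)) then 1 else 0)
      + ∑ i ∈ Finset.range n,
          (if i < p ∧ p ≤ i + r ∧ (i + r < n ∧
            Hostile (s (skip p i)) (s (skip p (i + r)))) then 1 else 0) := by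
    unfold hostCount
    rw [← Finset.sum_add_distrib]
    refine Finset.sum_le_sum fun i hi => ?_
    have e3 : (if i < p ∧ p ≤ i + r ∧ (i + r < n ∧
            Hostile (s (skip p i)) (s (skip p (i + r)))) then 1 else 0)
        = ∑ j ∈ Finset.range n, if j = i + r then (if i < p ∧ p ≤ j ∧
            Hostile (s (skip p i)) (s (skip p j)) then 1 else 0) else 0 := by
      rw [Finset.sum_ite_eq']
      simp only [Finset.mem_range]
      split_ifs <;> first | rfl | tauto
    rw [e3, ← Finset.sum_add_distrib]
    refine Finset.sum_le_sum fun j hj => ?_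
    by_cases hQ : Hostile (s (skip p i)) (s (skip p j))
    · simp only [hQ, and_true]
      unfold skip
      split_ifs <;> omega
    · simp [hQ]
  omega

lemma cnt_congr_skip (n p : ℕ) (hp : p ≤ n) (s : ℕ → ℕ) (j : ℕ) :
    cnt (n + 1) s j = (if s p = j then 1 else 0) + cnt n (fun i => s (skip p i)) j :=
  sum_range_skip _ hp

lemma cntPred_congr_skip (n p : ℕ) (hp : p ≤ n) (s : ℕ → ℕ) (j : ℕ) :
    cntPred (n + 1) s j = (if s p + 1 = j then 1 else 0) + cntPred n (fun i => s (skip p i)) j :=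
  sum_range_skip _ hp

lemma cntLt_congr_skip (n p : ℕ) (hp : p ≤ n) (s : ℕ → ℕ) (j : ℕ) :
    cntLt (n + 1) s j = (if s p < j then 1 else 0) + cntLt n (fun i => s (skip p i)) j :=
  sum_range_skip _ hp

lemma cnt_eq_zero {n : ℕ} {s : ℕ → ℕ} {j : ℕ} (h : ∀ i < n, s i < j) : cnt n s j = 0 :=
  Finset.sum_eq_zero fun i hi => if_neg (h i (Finset.mem_range.1 hi)).ne

lemma sortedCount_skip (K r n p : ℕ) (hp : p ≤ n) (s : ℕ → ℕ) (hK : s p ≤ K)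
    (hM : ∀ i < n, s (skip p i) ≤ s p) :
    sortedCount K r (n + 1) s = sortedCount K r n (fun i => s (skip p i))
      + (min r n - ∑ i ∈ Finset.range n, (if s p ≤ s (skip p i) + 1 then 1 else 0)) := by
  unfold sortedCount
  have key : ∀ j ∈ Finset.range (K + 1),
      ∑ x ∈ Finset.range (cnt (n + 1) s j),
        (min r (cntLt (n + 1) s j + x) - (cntPred (n + 1) s j + x))
      = ∑ x ∈ Finset.range (cnt n (fun i => s (skip p i)) j),
        (min r (cntLt n (fun i => s (skip p i)) j + x)
          - (cntPred n (fun i => s (skip p i)) j + x))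
        + if j = s p then (min r n - ∑ i ∈ Finset.range n,
            (if s p ≤ s (skip p i) + 1 then 1 else 0)) else 0 := by
    intro j _
    rcases lt_trichotomy j (s p) with h | h | h
    · rw [cnt_congr_skip n p hp, cntPred_congr_skip n p hp, cntLt_congr_skip n p hp,
        if_neg (by omega), if_neg (by omega), if_neg (by omega), if_neg (by omega)]
      simp
    · rw [cnt_congr_skip n p hp, cntPred_congr_skip n p hp, cntLt_congr_skip n p hp,
        if_pos h.symm, if_neg (by omega), if_neg (by omega), if_pos h, add_comm 1,
        Finset.sum_range_succ]
      simp only [zero_add]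
      congr 3
      · unfold cntLt cnt
        rw [← Finset.sum_add_distrib]
        trans ∑ i ∈ Finset.range n, 1
        · refine Finset.sum_congr rfl fun i hi => ?_
          have := hM i (Finset.mem_range.1 hi)
          dsimp only
          split_ifs <;> omega
        · simp
      · unfold cntPred cnt
        rw [← Finset.sum_add_distrib]
        refine Finset.sum_congr rfl fun i hi => ?_
        have := hM i (Finset.mem_range.1 hi)
        dsimp only
        split_ifs <;> omega
    · rw [if_neg (by omega), cnt_congr_skip n p hp, if_neg (by omega),
        cnt_eq_zero (fun i hi => lt_of_le_of_lt (hM i hi) h)]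
      simp
  rw [Finset.sum_congr rfl key, Finset.sum_add_distrib, Finset.sum_ite_eq', if_pos]
  simpa [Nat.lt_succ_iff] using hK

/-- Rearrangement inequality: sorting a finite sequence does not increase the number of hostile
pairs at distance at most `r`. Induction on the length, removing an entry of maximal value. -/
lemma sortedCount_le_hostCount (K r : ℕ) : ∀ (n : ℕ) (s : ℕ → ℕ), (∀ i, s i ≤ K) →
    sortedCount K r n s ≤ hostCount r n s := by
  intro n
  induction n with
  | zero => intro s _; simp [sortedCount, cnt]
  | succ n ih =>
    intro s hs
    obtain ⟨p, hp, hmax⟩ := Finset.exists_max_image (Finset.range (n + 1)) s ⟨0, by simp⟩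
    rw [Finset.mem_range, Nat.lt_succ_iff] at hp
    have hM : ∀ i < n, s (skip p i) ≤ s p := fun i hi => hmax _ (by
      unfold skip; rw [Finset.mem_range]; split_ifs <;> omega)
    have h1 := ih (fun i => s (skip p i)) (fun i => hs _)
    have h2 := hostCount_skip r n p hp s hM
    have h3 := removal_balance r n p (s p) hp (fun i => s (skip p i)) hM
    have h4 := sortedCount_skip K r n p hp s (hs p) hM
    omega

/-! ### The discrete energy bound -/

lemma sum_layers (c : ℕ → ℝ) {n d : ℕ} (hd : d ≤ n) :
    c d = ∑ r ∈ Finset.range n, (c r - c (r + 1)) * (if d ≤ r then 1 else 0) + c n := by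
  have h1 : ∑ r ∈ Finset.range n, (c r - c (r + 1)) * (if d ≤ r then (1 : ℝ) else 0)
      = ∑ r ∈ Finset.Ico d n, (c r - c (r + 1)) := by
    simp only [mul_ite, mul_one, mul_zero]
    rw [← Finset.sum_filter]
    congr 1
    ext r; simp; tauto
  rw [h1, Finset.sum_Ico_eq_sub _ hd, Finset.sum_range_sub', Finset.sum_range_sub']
  ring

lemma cntLt_add_cnt_le (n : ℕ) (s : ℕ → ℕ) (j : ℕ) : cntLt n s j + cnt n s j ≤ n := by
  unfold cntLt cnt
  rw [← Finset.sum_add_distrib]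
  refine (Finset.sum_le_sum (g := fun _ => 1) fun i _ => ?_).trans (by simp)
  split_ifs <;> omega

/-- The rearrangement inequality for a nonincreasing weight `c` of the distance, obtained from the
one for windows by writing `c` as a superposition of indicators of `{d ≤ r}`. -/
lemma sorted_weight_le (c : ℕ → ℝ) (hc : Antitone c) (h0 : ∀ d, 0 ≤ c d) (K n : ℕ)
    (s : ℕ → ℕ) (hs : ∀ i, s i ≤ K) :
    ∑ j ∈ Finset.range (K + 1), ∑ x ∈ Finset.range (cnt n s j),
      ∑ d ∈ Finset.Ioc (cntPred n s j + x) (cntLt n s j + x), c d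
    ≤ ∑ i ∈ Finset.range n, ∑ j ∈ Finset.range n,
      if i < j ∧ Hostile (s i) (s j) then c (j - i) else 0 := by
  have hL : ∑ j ∈ Finset.range (K + 1), ∑ x ∈ Finset.range (cnt n s j),
      ∑ d ∈ Finset.Ioc (cntPred n s j + x) (cntLt n s j + x), c d
      = ∑ r ∈ Finset.range n, (c r - c (r + 1)) * (sortedCount K r n s : ℝ)
        + c n * (sortedCount K n n s : ℝ) := by
    unfold sortedCount
    push_cast
    simp only [Finset.mul_sum]
    rw [Finset.sum_comm, ← Finset.sum_add_distrib]
    refine Finset.sum_congr rfl fun j _ => ?_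
    rw [Finset.sum_comm, ← Finset.sum_add_distrib]
    refine Finset.sum_congr rfl fun x hx => ?_
    rw [Finset.mem_range] at hx
    have hT : cntLt n s j + x ≤ n := by have := cntLt_add_cnt_le n s j; omega
    generalize cntLt n s j + x = T at *
    generalize cntPred n s j + x = F at *
    have hcard : ∀ r, ∑ d ∈ Finset.Ioc F T, (if d ≤ r then (1 : ℝ) else 0)
        = ((min r T - F : ℕ) : ℝ) := by
      intro r
      rw [Finset.sum_boole, ← Nat.card_Ioc]
      congr 2
      ext d; simp; tauto
    rw [Finset.sum_congr rfl (fun d hd => sum_layers c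
      (show d ≤ n by rw [Finset.mem_Ioc] at hd; omega)), Finset.sum_add_distrib,
      Finset.sum_comm]
    congr 1
    · refine Finset.sum_congr rfl fun r _ => ?_
      rw [← Finset.mul_sum, hcard]
    · rw [min_eq_right hT]
      simp [mul_comm]
  have hR : ∑ i ∈ Finset.range n, ∑ j ∈ Finset.range n,
      (if i < j ∧ Hostile (s i) (s j) then c (j - i) else 0)
      = ∑ r ∈ Finset.range n, (c r - c (r + 1)) * (hostCount r n s : ℝ)
        + c n * (hostCount n n s : ℝ) := by
    unfold hostCount
    push_cast
    simp only [Finset.mul_sum]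
    conv_rhs => rw [Finset.sum_comm, ← Finset.sum_add_distrib]
    refine Finset.sum_congr rfl fun i hi => ?_
    conv_rhs => rw [Finset.sum_comm, ← Finset.sum_add_distrib]
    refine Finset.sum_congr rfl fun j hj => ?_
    rw [Finset.mem_range] at hi hj
    by_cases h : i < j ∧ Hostile (s i) (s j)
    · rw [if_pos h, sum_layers c (show j - i ≤ n by omega)]
      congr 1
      · refine Finset.sum_congr rfl fun r _ => ?_
        congr 1
        refine if_congr ?_ rfl rfl
        simp only [h, true_and, and_true]; omega
      · rw [if_pos ⟨h.1, by omega, h.2⟩, mul_one]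
    · rw [if_neg h, if_neg (fun h' => h ⟨h'.1, h'.2.2⟩), Finset.sum_eq_zero, mul_zero, add_zero]
      intro r _
      rw [if_neg (fun h' => h ⟨h'.1, h'.2.2⟩), mul_zero]
  rw [hL, hR]
  gcongr with r _
  · exact sub_nonneg.2 (hc (Nat.le_succ r))
  · exact sortedCount_le_hostCount K r n s hs
  · exact h0 n
  · exact sortedCount_le_hostCount K n n s hs

/-- The discrete kernel replacing `1 / d ^ 2`: it equals `1 / (d - 1) - 1 / d` for `d ≥ 2`, which
makes its sums telescope, and the large value `K` for `d ≤ 1`. -/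
noncomputable def wt (K d : ℕ) : ℝ := if d ≤ 1 then (K : ℝ) else 1 / ((d : ℝ) - 1) - 1 / d

lemma wt_of_le {K d : ℕ} (h : d ≤ 1) : wt K d = K := if_pos h

lemma wt_succ {K d : ℕ} (h : 1 ≤ d) : wt K (d + 1) = 1 / (d : ℝ) - 1 / (d + 1) := by
  unfold wt; rw [if_neg (by omega)]; push_cast; ring

lemma wt_nonneg (K d : ℕ) : 0 ≤ wt K d := by
  rcases le_or_gt d 1 with h | h
  · rw [wt_of_le h]; positivity
  · obtain ⟨e, rfl⟩ : ∃ e, d = e + 1 := ⟨d - 1, by omega⟩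
    have he : (0 : ℝ) < e := by exact_mod_cast (by omega : 0 < e)
    rw [wt_succ (by omega), sub_nonneg]
    exact one_div_le_one_div_of_le he (by linarith)

lemma wt_antitone {K : ℕ} (hK : 1 ≤ K) : Antitone (wt K) := by
  refine antitone_nat_of_succ_le fun d => ?_
  have hK' : (1 : ℝ) ≤ K := by exact_mod_cast hK
  rcases Nat.lt_or_ge d 1 with h | h
  · rw [wt_of_le (by omega), wt_of_le (by omega)]
  · rcases Nat.lt_or_ge d 2 with h2 | h2
    · obtain rfl : d = 1 := by omega
      rw [wt_succ le_rfl, wt_of_le le_rfl]; norm_num; linarith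
    · obtain ⟨e, rfl⟩ : ∃ e, d = e + 1 := ⟨d - 1, by omega⟩
      have he : (0 : ℝ) < e := by exact_mod_cast (by omega : 0 < e)
      rw [wt_succ (by omega), wt_succ (by omega)]
      push_cast
      rw [div_sub_div _ _ (by positivity) (by positivity),
        div_sub_div _ _ (by positivity) (by positivity)]
      rw [div_le_div_iff₀ (by positivity) (by positivity)]
      nlinarith

lemma sum_wt {K F T : ℕ} (hF : 1 ≤ F) (hFT : F ≤ T) :
    ∑ d ∈ Finset.Ioc F T, wt K d = 1 / (F : ℝ) - 1 / T := by
  induction T, hFT using Nat.le_induction with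
  | base => simp
  | succ T h ih =>
    rw [Finset.sum_Ioc_succ_top (by omega), ih, wt_succ (by omega)]
    push_cast; ring

/-- A block of `a` entries preceded by a block of `b ≥ 1` entries. -/
lemma log_block_le {a b : ℕ} (hb : 1 ≤ b) :
    Real.log (((b : ℝ) + a) / b) ≤ ∑ x ∈ Finset.range a, 1 / ((b : ℝ) + x) := by
  have hb' : (0 : ℝ) < b := by exact_mod_cast hb
  induction a with
  | zero => simp [hb'.ne']
  | succ a ih =>
    rw [Finset.sum_range_succ]
    have h : Real.log (((b : ℝ) + (a + 1 : ℕ)) / b)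
        = Real.log (((b : ℝ) + a) / b) + Real.log (1 + 1 / ((b : ℝ) + a)) := by
      rw [← Real.log_mul (by positivity) (by positivity)]
      congr 1
      push_cast
      field_simp
      ring
    have h2 := Real.log_le_sub_one_of_pos (show (0 : ℝ) < 1 + 1 / ((b : ℝ) + a) by positivity)
    linarith

/-- The arithmetic-geometric mean inequality in the form that telescopes along the blocks. -/
lemma log_two_le_log {a b : ℝ} (ha : 0 < a) (hb : 0 < b) :
    Real.log 2 + (Real.log a - Real.log b) / 2 ≤ Real.log ((b + a) / b) := by
  rw [Real.log_div (by positivity) hb.ne']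
  have h : Real.log (4 * (a * b)) ≤ Real.log ((b + a) ^ 2) :=
    Real.log_le_log (by positivity) (by nlinarith [sq_nonneg (a - b)])
  rw [Real.log_mul (by norm_num) (by positivity), Real.log_mul ha.ne' hb.ne', Real.log_pow,
    show (4 : ℝ) = 2 ^ 2 by norm_num, Real.log_pow] at h
  push_cast at h
  linarith

lemma cntPred_succ (n : ℕ) (s : ℕ → ℕ) (j : ℕ) : cntPred n s (j + 1) = cnt n s j := by
  simp [cntPred, cnt]

lemma cnt_le_cntLt (n : ℕ) (s : ℕ → ℕ) {i j : ℕ} (h : i < j) : cnt n s i ≤ cntLt n s j := by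
  unfold cntLt cnt
  refine Finset.sum_le_sum fun k _ => ?_
  split_ifs <;> omega

lemma sum_cnt_le (K n : ℕ) (s : ℕ → ℕ) :
    ∑ j ∈ Finset.range K, (cnt n s (j + 1) : ℝ) ≤ n := by
  have : ∑ j ∈ Finset.range K, cnt n s (j + 1) ≤ n := by
    unfold cnt
    rw [Finset.sum_comm]
    refine (Finset.sum_le_sum (g := fun _ => 1) fun i _ => ?_).trans (by simp)
    rw [Finset.sum_boole]
    norm_cast
    rw [Finset.card_le_one]
    intro a ha b hb
    simp at ha hb; omega
  exact_mod_cast this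

/-- Lower bound for the weighted discrete energy of a sequence with values in `0, …, K` at least
`θ` of whose entries are `0` and at least `θ` of whose entries are `K`. If some intermediate value
is missing, the weight `K` of the distance one alone suffices. -/
lemma energy_lower {K n : ℕ} (hK : 1 ≤ K) (s : ℕ → ℕ) (hs : ∀ i, s i ≤ K) {θ : ℝ} (hθ : 0 < θ)
    (h0 : θ ≤ cnt n s 0) (h1 : θ ≤ cnt n s K) :
    K * Real.log 2 - 2 * (n / θ) ≤ ∑ i ∈ Finset.range n, ∑ j ∈ Finset.range n,
      if i < j ∧ Hostile (s i) (s j) then wt K (j - i) else 0 := by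
  refine le_trans ?_ (sorted_weight_le (wt K) (wt_antitone hK) (wt_nonneg K) K n s hs)
  have c0 : 1 ≤ cnt n s 0 := by
    have : (0 : ℝ) < cnt n s 0 := by linarith
    exact_mod_cast this
  have cK : 1 ≤ cnt n s K := by
    have : (0 : ℝ) < cnt n s K := by linarith
    exact_mod_cast this
  have hlog2 : Real.log 2 ≤ 1 := by linarith [Real.log_two_lt_d9]
  have hn0 : (cnt n s 0 : ℝ) ≤ n := by
    have := cntLt_add_cnt_le n s 0
    exact_mod_cast (by omega : cnt n s 0 ≤ n)
  have hnθ : 0 ≤ (n : ℝ) / θ := by positivity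
  rw [Finset.sum_range_succ']
  have hfirst : 0 ≤ ∑ x ∈ Finset.range (cnt n s 0),
      ∑ d ∈ Finset.Ioc (cntPred n s 0 + x) (cntLt n s 0 + x), wt K d :=
    Finset.sum_nonneg fun _ _ => Finset.sum_nonneg fun _ _ => wt_nonneg _ _
  by_cases hall : ∀ j ≤ K, 1 ≤ cnt n s j
  · have hstep : ∀ j ∈ Finset.range K,
        (Real.log 2 + (Real.log (cnt n s (j + 1)) - Real.log (cnt n s j)) / 2)
          - cnt n s (j + 1) * (1 / θ) ≤
        ∑ x ∈ Finset.range (cnt n s (j + 1)),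
          ∑ d ∈ Finset.Ioc (cntPred n s (j + 1) + x) (cntLt n s (j + 1) + x), wt K d := by
      intro j hj
      rw [Finset.mem_range] at hj
      rw [cntPred_succ]
      have ha := hall (j + 1) hj
      have hb := hall j hj.le
      have e1 := log_two_le_log (a := cnt n s (j + 1)) (b := cnt n s j)
        (by exact_mod_cast ha) (by exact_mod_cast hb)
      have e2 := log_block_le (a := cnt n s (j + 1)) hb
      have e3 : ∑ x ∈ Finset.range (cnt n s (j + 1)), (1 / ((cnt n s j : ℝ) + x) - 1 / θ) ≤
        ∑ x ∈ Finset.range (cnt n s (j + 1)),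
          ∑ d ∈ Finset.Ioc (cnt n s j + x) (cntLt n s (j + 1) + x), wt K d := by
        refine Finset.sum_le_sum fun x _ => ?_
        rw [sum_wt (by omega) (by have := cnt_le_cntLt n s (Nat.lt_add_one j); omega)]
        push_cast
        gcongr
        have : (cnt n s 0 : ℝ) ≤ cntLt n s (j + 1) := by
          exact_mod_cast cnt_le_cntLt n s (Nat.succ_pos j)
        have : (0 : ℝ) ≤ x := by positivity
        linarith
      rw [Finset.sum_sub_distrib, Finset.sum_const, Finset.card_range, nsmul_eq_mul] at e3
      linarith
    have hsum := Finset.sum_le_sum hstep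
    rw [Finset.sum_sub_distrib, Finset.sum_add_distrib, ← Finset.sum_div, Finset.sum_range_sub
      (fun j => Real.log (cnt n s j)), Finset.sum_const, Finset.card_range, nsmul_eq_mul,
      ← Finset.sum_mul] at hsum
    have e4 : (∑ j ∈ Finset.range K, (cnt n s (j + 1) : ℝ)) * (1 / θ) ≤ n / θ := by
      rw [mul_one_div]; gcongr; exact sum_cnt_le K n s
    have e5 : Real.log (cnt n s 0) - Real.log (cnt n s K) ≤ n / θ := by
      rw [← Real.log_div (by positivity) (by positivity)]
      refine (Real.log_le_sub_one_of_pos (by positivity)).trans ?_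
      have : (cnt n s 0 : ℝ) / cnt n s K ≤ n / θ := by gcongr
      linarith
    linarith
  · push Not at hall
    obtain ⟨j₀, hj₀, hz⟩ := hall
    -- the first nonempty value above an empty one
    have hex : ∃ j, j₀ < j ∧ j ≤ K ∧ 1 ≤ cnt n s j := by
      refine ⟨K, ?_, le_rfl, cK⟩
      rcases hj₀.lt_or_eq with h | h
      · exact h
      · rw [h] at hz; omega
    classical
    have hspec := Nat.find_spec hex
    have hmin := fun m => @Nat.find_min _ _ hex m
    generalize Nat.find hex = j at hspec hmin
    obtain ⟨i, rfl⟩ : ∃ i, j = i + 1 := ⟨j - 1, by omega⟩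
    have hi : cnt n s i = 0 := by
      rcases Nat.eq_or_lt_of_le (Nat.lt_succ_iff.1 hspec.1) with h | h
      · rw [← h]; omega
      · have := hmin i (Nat.lt_succ_self i)
        by_contra hne
        exact this ⟨h, by omega, by omega⟩
    have hterm : (K : ℝ) ≤ ∑ x ∈ Finset.range (cnt n s (i + 1)),
        ∑ d ∈ Finset.Ioc (cntPred n s (i + 1) + x) (cntLt n s (i + 1) + x), wt K d := by
      refine le_trans ?_ (Finset.single_le_sum (f := fun x =>
        ∑ d ∈ Finset.Ioc (cntPred n s (i + 1) + x) (cntLt n s (i + 1) + x), wt K d)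
        (fun _ _ => Finset.sum_nonneg fun _ _ => wt_nonneg _ _)
        (Finset.mem_range.2 (show 0 < cnt n s (i + 1) by omega)))
      refine le_trans ?_ (Finset.single_le_sum (f := fun d => wt K d)
        (fun _ _ => wt_nonneg _ _) (a := 1) ?_)
      · rw [wt_of_le le_rfl]
      · rw [Finset.mem_Ioc, cntPred_succ, hi]
        have := cnt_le_cntLt n s (show 0 < i + 1 by omega)
        exact ⟨by omega, by omega⟩
    have := Finset.single_le_sum (f := fun j => ∑ x ∈ Finset.range (cnt n s (j + 1)),
        ∑ d ∈ Finset.Ioc (cntPred n s (j + 1) + x) (cntLt n s (j + 1) + x), wt K d)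
        (fun _ _ => Finset.sum_nonneg fun _ _ => Finset.sum_nonneg fun _ _ => wt_nonneg _ _)
        (Finset.mem_range.2 (show i < K by omega))
    have hK0 : (0 : ℝ) ≤ K := by positivity
    nlinarith

/-! ### Sampling a function on grids -/

/-- The pairs of points of `[a, b)` with hostile levels. -/
def hostSet (v : ℝ → ℕ) (a b : ℝ) : Set (ℝ × ℝ) :=
  {p | p.1 ∈ Ico a b ∧ p.2 ∈ Ico a b ∧ Hostile (v p.1) (v p.2)}

lemma measurableSet_hostSet {v : ℝ → ℕ} (hv : Measurable v) (a b : ℝ) :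
    MeasurableSet (hostSet v a b) := by
  have h1 : MeasurableSet {p : ℝ × ℝ | p.1 ∈ Ico a b} := measurable_fst measurableSet_Ico
  have h2 : MeasurableSet {p : ℝ × ℝ | p.2 ∈ Ico a b} := measurable_snd measurableSet_Ico
  have h3 : MeasurableSet {p : ℝ × ℝ | Hostile (v p.1) (v p.2)} :=
    ((hv.comp measurable_fst).prodMk (hv.comp measurable_snd))
      (MeasurableSet.of_discrete (s := {q : ℕ × ℕ | Hostile q.1 q.2}))
  exact h1.inter (h2.inter h3)

/-- The indicator of the hostile pairs of points of `[a, b)`. -/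
noncomputable def hostInd (v : ℝ → ℕ) (a b x y : ℝ) : ℝ≥0∞ :=
  (hostSet v a b).indicator 1 (x, y)

lemma measurable_hostInd {v : ℝ → ℕ} (hv : Measurable v) (a b : ℝ) :
    Measurable (fun p : ℝ × ℝ => hostInd v a b p.1 p.2) :=
  measurable_one.indicator (measurableSet_hostSet hv a b)

lemma hostInd_symm (v : ℝ → ℕ) (a b x y : ℝ) : hostInd v a b x y = hostInd v a b y x := by
  unfold hostInd
  have : (x, y) ∈ hostSet v a b ↔ (y, x) ∈ hostSet v a b :=
    ⟨fun h => ⟨h.2.1, h.1, h.2.2.symm⟩, fun h => ⟨h.2.1, h.1, h.2.2.symm⟩⟩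
  by_cases h : (x, y) ∈ hostSet v a b
  · rw [indicator_of_mem h, indicator_of_mem (this.1 h)]; rfl
  · rw [indicator_of_notMem h, indicator_of_notMem (fun h' => h (this.2 h'))]

/-- The measure of the hostile pairs of points of `[a, b)` at oriented distance `r`. -/
noncomputable def corr (v : ℝ → ℕ) (a b r : ℝ) : ℝ≥0∞ := ∫⁻ x, hostInd v a b x (x + r)

lemma measurable_corr {v : ℝ → ℕ} (hv : Measurable v) (a b : ℝ) : Measurable (corr v a b) :=
  Measurable.lintegral_prod_right' (f := fun p : ℝ × ℝ => hostInd v a b p.2 (p.2 + p.1))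
    ((measurable_hostInd hv a b).comp
      (measurable_snd.prodMk (measurable_snd.add measurable_fst)))

lemma corr_neg (v : ℝ → ℕ) (a b r : ℝ) : corr v a b (-r) = corr v a b r := by
  unfold corr
  rw [← lintegral_add_right_eq_self _ r]
  refine lintegral_congr fun x => ?_
  rw [hostInd_symm]
  congr 1; ring

/-- Translates of the cell `[0, h)` tile an interval. -/
lemma sum_cells_le (g : ℝ → ℝ≥0∞) (a : ℝ) {h : ℝ} (hh : 0 < h) (n : ℕ) :
    ∑ i ∈ Finset.range n, ∫⁻ x in Ico 0 h, g (a + x + i * h) ≤ ∫⁻ x, g x := by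
  have h1 : ∀ i : ℕ, ∫⁻ x in Ico 0 h, g (a + x + i * h)
      = ∫⁻ x in Ico (a + i * h) (a + (i + 1 : ℕ) * h), g x := by
    intro i
    rw [← lintegral_indicator measurableSet_Ico, ← lintegral_indicator measurableSet_Ico,
      ← lintegral_add_right_eq_self ((Ico (a + i * h) (a + (i + 1 : ℕ) * h)).indicator g)
        (a + i * h)]
    refine lintegral_congr fun x => ?_
    have e : a + x + i * h = x + (a + i * h) := by ring
    by_cases hx : x ∈ Ico 0 h
    · rw [indicator_of_mem hx, indicator_of_mem, e]
      push_cast; constructor <;> nlinarith [hx.1, hx.2]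
    · rw [indicator_of_notMem hx, indicator_of_notMem]
      intro hx'
      push_cast at hx'
      exact hx ⟨by linarith [hx'.1], by linarith [hx'.2]⟩
  have hmono : Monotone fun i : ℕ => a + (i : ℝ) * h := by
    intro i j hij
    have : (i : ℝ) ≤ j := by exact_mod_cast hij
    simp only; gcongr
  simp only [h1]
  have hdisj : Pairwise (Function.onFun Disjoint
      fun i : ℕ => Ico (a + (i : ℝ) * h) (a + ((i + 1 : ℕ) : ℝ) * h)) := by
    have := hmono.pairwise_disjoint_on_Ico_succ
    simpa using this
  rw [← lintegral_biUnion_finset (fun i _ j _ hij => hdisj hij) (fun _ _ => measurableSet_Ico)]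
  exact setLIntegral_le_lintegral _ _

lemma sum_lt_le_tsum (F : ℕ → ℝ≥0∞) (i n : ℕ) :
    ∑ j ∈ Finset.range n, (if i < j then F (j - i) else 0) ≤ ∑' d, F (d + 1) := by
  rw [← Finset.sum_filter]
  have : ∑ j ∈ (Finset.range n).filter (fun j => i < j), F (j - i)
      = ∑ d ∈ ((Finset.range n).filter (fun j => i < j)).image (fun j => j - i - 1), F (d + 1) := by
    rw [Finset.sum_image]
    · refine Finset.sum_congr rfl fun j hj => ?_
      rw [Finset.mem_filter] at hj
      congr 1; omega
    · intro j hj k hk hjk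
      simp only [Finset.coe_filter, mem_ofPred_eq] at hj hk hjk
      omega
  rw [this]
  exact ENNReal.sum_le_tsum _

lemma cnt_ge_of_range {n q : ℕ} (s : ℕ → ℕ) (j t : ℕ) (ht : t + q ≤ n)
    (B : ℕ → Prop) [DecidablePred B] (h : ∀ i < q, ¬ B (t + i) → s (t + i) = j) :
    q ≤ cnt n s j + ∑ i ∈ Finset.range n, (if B i then 1 else 0) := by
  unfold cnt
  rw [← Finset.sum_add_distrib]
  calc q = ∑ i ∈ Finset.Ico t (t + q), 1 := by simp
    _ ≤ ∑ i ∈ Finset.Ico t (t + q), ((if s i = j then 1 else 0) + if B i then 1 else 0) := by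
      refine Finset.sum_le_sum fun i hi => ?_
      rw [Finset.mem_Ico] at hi
      have := h (i - t) (by omega)
      rw [Nat.add_sub_cancel' hi.1] at this
      by_cases hB : B i
      · simp [hB]
      · simp [this hB]
    _ ≤ _ := by
      refine Finset.sum_le_sum_of_subset fun i hi => ?_
      rw [Finset.mem_Ico] at hi
      rw [Finset.mem_range]; omega

/-- The discrete lower bound for the samples of `v` on the grid of step `h` through `a + x`. -/
lemma sample_pointwise {v : ℝ → ℕ} {K : ℕ} (hK : 1 ≤ K) (hvK : ∀ x, v x ≤ K)
    {a b η : ℝ} (hη : 0 < η) (hηb : η ≤ b - a) (Bad : Set ℝ)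
    (hleft : ∀ x ∈ Ico a (a + η), x ∉ Bad → v x = 0)
    (hright : ∀ x ∈ Ico (b - η) b, x ∉ Bad → v x = K)
    {h : ℝ} (hh : 0 < h) (hh4 : h ≤ η / 4) {x : ℝ} (hx : x ∈ Ico 0 h) :
    ENNReal.ofReal (K * Real.log 2 - 8 * ((b - a) / η)) ≤
      ∑ i ∈ Finset.range ⌊(b - a) / h⌋₊, ∑ j ∈ Finset.range ⌊(b - a) / h⌋₊,
        (if i < j then ENNReal.ofReal (wt K (j - i)) *
          hostInd v a b (a + x + i * h) (a + x + i * h + (j - i : ℕ) * h) else 0)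
      + ENNReal.ofReal ((K * Real.log 2 - 8 * ((b - a) / η)) * (4 * h / η)) *
        ∑ i ∈ Finset.range ⌊(b - a) / h⌋₊, Bad.indicator 1 (a + x + i * h) := by
  classical
  set X := K * Real.log 2 - 8 * ((b - a) / η) with hX
  set n := ⌊(b - a) / h⌋₊ with hn
  have hba : 0 < b - a := by linarith
  have hnh : (n : ℝ) * h ≤ b - a := by
    have := Nat.floor_le (show 0 ≤ (b - a) / h by positivity)
    rwa [le_div_iff₀ hh] at this
  have hnh' : b - a < (n + 1) * h := by
    have := Nat.lt_floor_add_one ((b - a) / h)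
    rwa [div_lt_iff₀ hh] at this
  set s : ℕ → ℕ := fun i => v (a + x + i * h) with hs
  set N := ∑ i ∈ Finset.range n, (if a + x + i * h ∈ Bad then 1 else 0) with hN
  have hNc : ∑ i ∈ Finset.range n, Bad.indicator 1 (a + x + i * h) = (N : ℝ≥0∞) := by
    rw [hN]; push_cast
    refine Finset.sum_congr rfl fun i _ => ?_
    simp [indicator_apply]
  rw [hNc]
  have hin : ∀ i < n, a + x + i * h ∈ Ico a b := by
    intro i hi
    have : ((i : ℝ) + 1) * h ≤ n * h := by
      gcongr; exact_mod_cast hi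
    have h0 : (0 : ℝ) ≤ i * h := by positivity
    exact ⟨by linarith [hx.1], by linarith [hx.2]⟩
  rcases le_or_gt X 0 with hX0 | hX0
  · rw [ENNReal.ofReal_of_nonpos hX0]; exact zero_le
  by_cases hbad : η / (4 * h) ≤ N
  · refine le_trans ?_ le_add_self
    rw [← ENNReal.ofReal_natCast, ← ENNReal.ofReal_mul (by positivity)]
    refine ENNReal.ofReal_le_ofReal ?_
    calc X = X * (4 * h / η) * (η / (4 * h)) := by field_simp
      _ ≤ _ := by gcongr
  · push Not at hbad
    refine le_trans ?_ le_self_add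
    -- the number of samples in each of the two end portions
    set q := ⌊η / h⌋₊ - 1 with hq
    have hq4 : (4 : ℝ) ≤ η / h := by rw [le_div_iff₀ hh]; linarith
    have hfl : 1 ≤ ⌊η / h⌋₊ := Nat.le_floor (by push_cast; linarith)
    have hq1 : (q : ℝ) + 1 ≤ η / h := by
      have := Nat.floor_le (show 0 ≤ η / h by positivity)
      have e : (q : ℝ) + 1 = ⌊η / h⌋₊ := by rw [hq]; exact_mod_cast Nat.sub_add_cancel hfl
      linarith
    have hq2 : η / h < (q : ℝ) + 2 := by
      have := Nat.lt_floor_add_one (η / h)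
      have e : (q : ℝ) + 1 = ⌊η / h⌋₊ := by rw [hq]; exact_mod_cast Nat.sub_add_cancel hfl
      linarith
    have hq1h : ((q : ℝ) + 1) * h ≤ η := by rwa [le_div_iff₀ hh] at hq1
    have hqn : q ≤ n := by
      have : ⌊η / h⌋₊ ≤ n := Nat.floor_le_floor (by gcongr)
      omega
    have hθ : (0 : ℝ) < η / (4 * h) := by positivity
    have hθ2 : η / (4 * h) + η / (4 * h) ≤ q := by
      have e : η / (4 * h) = η / h / 4 := by field_simp
      rw [e]; linarith
    have hc0 := cnt_ge_of_range (n := n) (q := q) s 0 0 (by omega) (fun i => a + x + i * h ∈ Bad) (by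
      intro i hi hB
      simp only [zero_add] at hB ⊢
      refine hleft _ ⟨by have := (hin i (by omega)).1; linarith, ?_⟩ hB
      have : ((i : ℝ) + 1) * h ≤ q * h := by
        gcongr; exact_mod_cast hi
      linarith [hx.2])
    have hcK := cnt_ge_of_range (n := n) (q := q) s K (n - q) (by omega) (fun i => a + x + i * h ∈ Bad) (by
      intro i hi hB
      refine hright _ ⟨?_, (hin _ (by omega)).2⟩ hB
      have : ((n : ℝ) - q) * h ≤ ((n - q + i : ℕ) : ℝ) * h := by
        gcongr
        push_cast [Nat.cast_sub hqn]
        have : (0 : ℝ) ≤ i := by positivity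
        linarith
      nlinarith [hx.1])
    have hc0' : (q : ℝ) ≤ cnt n s 0 + N := by exact_mod_cast hc0
    have hcK' : (q : ℝ) ≤ cnt n s K + N := by exact_mod_cast hcK
    have hnθ : (n : ℝ) / (η / (4 * h)) ≤ 4 * ((b - a) / η) := by
      rw [div_le_iff₀ hθ]
      have : 4 * ((b - a) / η) * (η / (4 * h)) = (b - a) / h := by field_simp
      rw [this, le_div_iff₀ hh]; exact hnh
    clear_value X
    generalize η / (4 * h) = θ at hθ hθ2 hbad hnθ
    have hE := energy_lower hK s (fun i => hvK _) hθ (by linarith) (by linarith)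
    have hE' := ENNReal.ofReal_le_ofReal (show X ≤ _ from le_trans (by rw [hX]; linarith only [hnθ]) hE)
    refine hE'.trans (le_of_eq ?_)
    rw [ENNReal.ofReal_sum_of_nonneg (fun i _ => Finset.sum_nonneg fun j _ => by
      split_ifs; exacts [wt_nonneg _ _, le_rfl])]
    refine Finset.sum_congr rfl fun i hi => ?_
    rw [ENNReal.ofReal_sum_of_nonneg (fun j _ => by
      split_ifs; exacts [wt_nonneg _ _, le_rfl])]
    refine Finset.sum_congr rfl fun j hj => ?_
    rw [Finset.mem_range] at hi hj
    by_cases hij : i < j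
    · rw [if_pos hij]
      have e : a + x + i * h + (j - i : ℕ) * h = a + x + j * h := by
        rw [Nat.cast_sub hij.le]; ring
      rw [e]
      unfold hostInd
      by_cases hH : Hostile (s i) (s j)
      · rw [if_pos ⟨hij, hH⟩, indicator_of_mem (show _ ∈ hostSet v a b from
          ⟨hin i hi, hin j hj, hH⟩)]
        simp
      · rw [if_neg (fun h' => hH h'.2), indicator_of_notMem (fun h' => hH h'.2.2)]
        simp
    · rw [if_neg hij, if_neg (fun h' => hij h'.1), ENNReal.ofReal_zero]

/-- The pointwise bound integrated over the position of the grid. -/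
lemma sample_step {v : ℝ → ℕ} (hv : Measurable v) {K : ℕ} (hK : 1 ≤ K) (hvK : ∀ x, v x ≤ K)
    {a b η : ℝ} (hη : 0 < η) (hηb : η ≤ b - a) {Bad : Set ℝ} (hBad : MeasurableSet Bad)
    (hleft : ∀ x ∈ Ico a (a + η), x ∉ Bad → v x = 0)
    (hright : ∀ x ∈ Ico (b - η) b, x ∉ Bad → v x = K)
    {h : ℝ} (hh : 0 < h) (hh4 : h ≤ η / 4) :
    ENNReal.ofReal (K * Real.log 2 - 8 * ((b - a) / η)) * ENNReal.ofReal h ≤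
      ∑' d : ℕ, ENNReal.ofReal (wt K (d + 1)) * corr v a b ((d + 1 : ℕ) * h)
      + ENNReal.ofReal ((K * Real.log 2 - 8 * ((b - a) / η)) * (4 * h / η)) * volume Bad := by
  set X := K * Real.log 2 - 8 * ((b - a) / η) with hX
  set n := ⌊(b - a) / h⌋₊ with hn
  have hmI : ∀ i k : ℕ, Measurable fun x : ℝ =>
      hostInd v a b (a + x + i * h) (a + x + i * h + k * h) := fun i k =>
    (measurable_hostInd hv a b).comp (by fun_prop : Measurable fun x : ℝ =>
      ((a + x + i * h, a + x + i * h + k * h) : ℝ × ℝ))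
  have hmB : ∀ i : ℕ, Measurable fun x : ℝ =>
      (Bad.indicator 1 (a + x + i * h) : ℝ≥0∞) := fun i =>
    (measurable_one.indicator hBad).comp (by fun_prop : Measurable fun x : ℝ => a + x + i * h)
  have hmT : ∀ i j : ℕ, Measurable fun x : ℝ =>
      (if i < j then ENNReal.ofReal (wt K (j - i)) *
          hostInd v a b (a + x + i * h) (a + x + i * h + (j - i : ℕ) * h) else 0) := by
    intro i j
    split_ifs
    · exact (hmI i (j - i)).const_mul _
    · exact measurable_const
  calc ENNReal.ofReal X * ENNReal.ofReal h = ∫⁻ _ in Ico 0 h, ENNReal.ofReal X := by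
        rw [setLIntegral_const, Real.volume_Ico, sub_zero]
    _ ≤ ∫⁻ x in Ico 0 h, (∑ i ∈ Finset.range n, ∑ j ∈ Finset.range n,
        (if i < j then ENNReal.ofReal (wt K (j - i)) *
          hostInd v a b (a + x + i * h) (a + x + i * h + (j - i : ℕ) * h) else 0)
      + ENNReal.ofReal (X * (4 * h / η)) *
        ∑ i ∈ Finset.range n, Bad.indicator 1 (a + x + i * h)) :=
      setLIntegral_mono' measurableSet_Ico fun x hx =>
        sample_pointwise hK hvK hη hηb Bad hleft hright hh hh4 hx
    _ = ∑ i ∈ Finset.range n, ∑ j ∈ Finset.range n,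
        (if i < j then ENNReal.ofReal (wt K (j - i)) *
          ∫⁻ x in Ico 0 h, hostInd v a b (a + x + i * h) (a + x + i * h + (j - i : ℕ) * h) else 0)
      + ENNReal.ofReal (X * (4 * h / η)) *
        ∑ i ∈ Finset.range n, ∫⁻ x in Ico 0 h, Bad.indicator 1 (a + x + i * h) := by
      rw [lintegral_add_left (Finset.measurable_fun_sum _ fun i _ =>
        Finset.measurable_fun_sum _ fun j _ => hmT i j),
        lintegral_finsetSum _ (fun i _ => Finset.measurable_fun_sum _ fun j _ => hmT i j),
        lintegral_const_mul _ (Finset.measurable_fun_sum _ fun i _ => hmB i),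
        lintegral_finsetSum _ (fun i _ => hmB i)]
      congr 1
      refine Finset.sum_congr rfl fun i _ => ?_
      rw [lintegral_finsetSum _ (fun j _ => hmT i j)]
      refine Finset.sum_congr rfl fun j _ => ?_
      split_ifs
      · rw [lintegral_const_mul _ (hmI i _)]
      · simp
    _ ≤ _ := by
      gcongr
      · calc _ ≤ ∑ i ∈ Finset.range n, ∑' d : ℕ, ENNReal.ofReal (wt K (d + 1)) *
              ∫⁻ x in Ico 0 h, hostInd v a b (a + x + i * h)
                (a + x + i * h + (d + 1 : ℕ) * h) :=
            Finset.sum_le_sum fun i _ => sum_lt_le_tsum (fun k => ENNReal.ofReal (wt K k) *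
              ∫⁻ x in Ico 0 h, hostInd v a b (a + x + i * h) (a + x + i * h + k * h)) i n
          _ = ∑' d : ℕ, ENNReal.ofReal (wt K (d + 1)) * ∑ i ∈ Finset.range n,
              ∫⁻ x in Ico 0 h, hostInd v a b (a + x + i * h)
                (a + x + i * h + (d + 1 : ℕ) * h) := by
            rw [← Summable.tsum_finsetSum (fun _ _ => ENNReal.summable)]
            simp only [Finset.mul_sum]
          _ ≤ _ := by
            gcongr with d
            exact sum_cells_le (fun y => hostInd v a b y (y + (d + 1 : ℕ) * h)) a hh n
      · refine (sum_cells_le (Bad.indicator 1) a hh n).trans ?_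
        rw [lintegral_indicator_one hBad]

/-! ### Averaging over the steps of the grids -/

/-- The interaction energy of the pairs `x < y` of hostile points. -/
noncomputable def halfEnergy (v : ℝ → ℕ) (a b : ℝ) : ℝ≥0∞ :=
  ∫⁻ r in Ioi (0 : ℝ), ENNReal.ofReal (1 / r ^ 2) * corr v a b r

lemma lintegral_one_div {h₁ h₂ : ℝ} (h1 : 0 < h₁) (h12 : h₁ ≤ h₂) :
    ∫⁻ h in Ioo h₁ h₂, ENNReal.ofReal (1 / h) = ENNReal.ofReal (Real.log (h₂ / h₁)) := by
  rw [← integral_one_div_of_pos h1 (h1.trans_le h12), intervalIntegral.integral_of_le h12,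
    integral_Ioc_eq_integral_Ioo, ofReal_integral_eq_lintegral_ofReal]
  · have : ContinuousOn (fun x : ℝ => 1 / x) (Icc h₁ h₂) :=
      continuousOn_const.div continuousOn_id fun x hx => (h1.trans_le hx.1).ne'
    exact this.integrableOn_Icc.mono_set Ioo_subset_Icc_self
  · filter_upwards [self_mem_ae_restrict measurableSet_Ioo] with x hx
    have := h1.trans hx.1
    positivity

lemma lintegral_comp_scale {f : ℝ → ℝ≥0∞} (hf : Measurable f) {D : ℝ} (hD : 0 < D) (h₁ h₂ : ℝ)
    (h1 : 0 < h₁) :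
    ∫⁻ h in Ioo h₁ h₂, ENNReal.ofReal (1 / h ^ 2) * f (D * h)
      = ENNReal.ofReal D * ∫⁻ r in Ioi (0 : ℝ),
          (Ioo (D * h₁) (D * h₂)).indicator (fun r => ENNReal.ofReal (1 / r ^ 2) * f r) r := by
  have hG : Measurable ((Ioo (D * h₁) (D * h₂)).indicator
      (fun r => ENNReal.ofReal (1 / r ^ 2) * f r)) :=
    (Measurable.mul (by fun_prop) hf).indicator measurableSet_Ioo
  have hmap := lintegral_map (μ := volume) hG (measurable_const_mul D)
  rw [Real.map_volume_mul_left hD.ne', lintegral_smul_measure] at hmap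
  have hset : ∫⁻ r in Ioi (0 : ℝ),
          (Ioo (D * h₁) (D * h₂)).indicator (fun r => ENNReal.ofReal (1 / r ^ 2) * f r) r
      = ∫⁻ r, (Ioo (D * h₁) (D * h₂)).indicator (fun r => ENNReal.ofReal (1 / r ^ 2) * f r) r := by
    rw [← lintegral_indicator measurableSet_Ioi]
    refine lintegral_congr fun r => ?_
    by_cases hr : r ∈ Ioo (D * h₁) (D * h₂)
    · have : 0 < D * h₁ := by positivity
      rw [indicator_of_mem (show r ∈ Ioi (0 : ℝ) from this.trans hr.1)]
    · rw [indicator_of_notMem hr, indicator_apply_eq_zero]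
      intro _; rw [indicator_of_notMem hr]
  have hpt : ∀ h, (Ioo h₁ h₂).indicator (fun h => ENNReal.ofReal (1 / h ^ 2) * f (D * h)) h
      = ENNReal.ofReal (D ^ 2) * (Ioo (D * h₁) (D * h₂)).indicator
          (fun r => ENNReal.ofReal (1 / r ^ 2) * f r) (D * h) := by
    intro h
    by_cases hh : h ∈ Ioo h₁ h₂
    · have h0 : 0 < h := h1.trans hh.1
      rw [indicator_of_mem hh, indicator_of_mem (show D * h ∈ Ioo (D * h₁) (D * h₂) from
        ⟨by gcongr; exact hh.1, by gcongr; exact hh.2⟩), ← mul_assoc,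
        ← ENNReal.ofReal_mul (by positivity)]
      congr 2
      field_simp
    · rw [indicator_of_notMem hh, indicator_of_notMem, mul_zero]
      intro hh'
      exact hh ⟨lt_of_mul_lt_mul_left hh'.1 hD.le, lt_of_mul_lt_mul_left hh'.2 hD.le⟩
  rw [← lintegral_indicator measurableSet_Ioo, lintegral_congr hpt,
    lintegral_const_mul _ (show Measurable fun h => (Ioo (D * h₁) (D * h₂)).indicator
      (fun r => ENNReal.ofReal (1 / r ^ 2) * f r) (D * h) from
      hG.comp (measurable_const_mul D)), ← hmap, hset, smul_eq_mul,
    ← mul_assoc, ← ENNReal.ofReal_mul (by positivity), abs_of_pos (by positivity)]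
  congr 2
  field_simp

lemma sum_kernel_le {K : ℕ} (hK : 1 ≤ K) {α : ℝ} (hα : 0 < α) (N : ℕ) :
    ∑ d ∈ Finset.range N, (if α < (d + 1 : ℕ) then ((d + 1 : ℕ) : ℝ) * wt K (d + 1) else 0)
      ≤ if α < N then K + 2 - 1 / (N : ℝ) + Real.log (N / α) else 0 := by
  have hK' : (1 : ℝ) ≤ K := by exact_mod_cast hK
  induction N with
  | zero => simp [hα.not_gt]
  | succ N ih =>
    rw [Finset.sum_range_succ]
    by_cases h : α < (N + 1 : ℕ)
    · rw [if_pos h, if_pos h]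
      rcases Nat.eq_zero_or_pos N with rfl | hN
      · have : 0 ≤ Real.log (((0 + 1 : ℕ) : ℝ) / α) :=
          Real.log_nonneg (by rw [le_div_iff₀ hα]; linarith)
        rw [wt_of_le le_rfl]
        norm_num at this ⊢
        linarith
      · have hN' : (1 : ℝ) ≤ N := by exact_mod_cast hN
        have hwt : ((N + 1 : ℕ) : ℝ) * wt K (N + 1) = 1 / (N : ℝ) := by
          rw [wt_succ hN]; push_cast; field_simp; ring
        rw [hwt]
        by_cases h' : α < N
        · rw [if_pos h'] at ih
          have e1 : Real.log ((N + 1 : ℕ) / α) = Real.log (N / α) + Real.log ((N + 1) / N) := by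
            rw [← Real.log_mul (by positivity) (by positivity)]
            congr 1; push_cast; field_simp
          have e2 : 1 - ((N + 1) / (N : ℝ))⁻¹ ≤ Real.log ((N + 1) / N) :=
            Real.one_sub_inv_le_log_of_pos (by positivity)
          have e3 : 1 - ((N + 1) / (N : ℝ))⁻¹ = 1 / ((N + 1 : ℕ) : ℝ) := by
            push_cast; field_simp; ring
          linarith
        · rw [if_neg h'] at ih
          have e1 : 0 ≤ Real.log ((N + 1 : ℕ) / α) :=
            Real.log_nonneg (by rw [le_div_iff₀ hα]; linarith)
          have e2 : 1 / (N : ℝ) ≤ 1 := by rw [div_le_one (by positivity)]; exact hN'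
          have e3 : 1 / ((N + 1 : ℕ) : ℝ) ≤ 1 := by
            rw [div_le_one (by positivity)]; push_cast; linarith
          linarith
    · have h' : ¬ α < (N : ℝ) := fun h' => h (by push_cast; linarith)
      rw [if_neg h'] at ih
      rw [if_neg h, if_neg h]
      linarith

/-- Averaging the discrete kernel over the steps `h` of the grids, with respect to `dh / h`,
reproduces the kernel `1 / r ^ 2` up to a bounded error. -/
lemma tsum_kernel_le {K : ℕ} (hK : 1 ≤ K) {h₁ h₂ r : ℝ} (h1 : 0 < h₁) (h12 : h₁ ≤ h₂)
    (hr : 0 < r) :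
    ∑' d : ℕ, (if r ∈ Ioo (((d + 1 : ℕ) : ℝ) * h₁) (((d + 1 : ℕ) : ℝ) * h₂) then
      ENNReal.ofReal (((d + 1 : ℕ) : ℝ) * wt K (d + 1)) else 0)
      ≤ ENNReal.ofReal (K + 2 + Real.log (h₂ / h₁)) := by
  have h2 : 0 < h₂ := h1.trans_le h12
  have hlog : 0 ≤ Real.log (h₂ / h₁) := Real.log_nonneg (by rw [le_div_iff₀ h1]; linarith)
  set N := ⌊r / h₁⌋₊ with hN
  have hsupp : ∀ d ∉ Finset.range N,
      (if r ∈ Ioo (((d + 1 : ℕ) : ℝ) * h₁) (((d + 1 : ℕ) : ℝ) * h₂) then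
      ENNReal.ofReal (((d + 1 : ℕ) : ℝ) * wt K (d + 1)) else 0) = 0 := by
    intro d hd
    rw [if_neg]
    intro hd'
    rw [Finset.mem_range, not_lt] at hd
    have := (Nat.le_floor (by rw [le_div_iff₀ h1]; exact hd'.1.le) : d + 1 ≤ N)
    omega
  rw [tsum_eq_sum hsupp]
  calc _ ≤ ∑ d ∈ Finset.range N, ENNReal.ofReal (if r / h₂ < (d + 1 : ℕ) then
        ((d + 1 : ℕ) : ℝ) * wt K (d + 1) else 0) := by
        refine Finset.sum_le_sum fun d _ => ?_
        by_cases h : r ∈ Ioo (((d + 1 : ℕ) : ℝ) * h₁) (((d + 1 : ℕ) : ℝ) * h₂)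
        · rw [if_pos h, if_pos (by rw [div_lt_iff₀ h2]; exact h.2)]
        · rw [if_neg h]; exact zero_le
    _ = ENNReal.ofReal (∑ d ∈ Finset.range N, (if r / h₂ < (d + 1 : ℕ) then
        ((d + 1 : ℕ) : ℝ) * wt K (d + 1) else 0)) := by
        rw [ENNReal.ofReal_sum_of_nonneg]
        intro d _
        split_ifs
        · exact mul_nonneg (by positivity) (wt_nonneg _ _)
        · exact le_rfl
    _ ≤ _ := by
        refine ENNReal.ofReal_le_ofReal ((sum_kernel_le hK (by positivity) N).trans ?_)
        split_ifs with h
        · have hr2 : 0 < r / h₂ := by positivity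
          have hN0 : (0 : ℝ) < N := hr2.trans h
          have e1 : Real.log (N / (r / h₂)) ≤ Real.log (h₂ / h₁) := by
            refine Real.log_le_log (by positivity) ?_
            rw [div_le_iff₀ hr2]
            have : h₂ / h₁ * (r / h₂) = r / h₁ := by field_simp
            rw [this]
            exact Nat.floor_le (by positivity)
          have e2 : 0 ≤ 1 / (N : ℝ) := by positivity
          linarith
        · positivity

lemma energy_log {v : ℝ → ℕ} (hv : Measurable v) {K : ℕ} (hK : 1 ≤ K) (hvK : ∀ x, v x ≤ K)
    {a b η : ℝ} (hη : 0 < η) (hηb : η ≤ b - a) {Bad : Set ℝ} (hBad : MeasurableSet Bad)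
    (hleft : ∀ x ∈ Ico a (a + η), x ∉ Bad → v x = 0)
    (hright : ∀ x ∈ Ico (b - η) b, x ∉ Bad → v x = K)
    {h₁ h₂ : ℝ} (h1 : 0 < h₁) (h12 : h₁ ≤ h₂) (h24 : h₂ ≤ η / 4) :
    ENNReal.ofReal (K * Real.log 2 - 8 * ((b - a) / η)) * ENNReal.ofReal (Real.log (h₂ / h₁)) ≤
      ENNReal.ofReal (K + 2 + Real.log (h₂ / h₁)) * halfEnergy v a b
      + ENNReal.ofReal ((K * Real.log 2 - 8 * ((b - a) / η)) * (4 / η)) * volume Bad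
        * ENNReal.ofReal (Real.log (h₂ / h₁)) := by
  set X := K * Real.log 2 - 8 * ((b - a) / η) with hX
  have hmc : ∀ D : ℝ, Measurable fun h : ℝ =>
      ENNReal.ofReal (1 / h ^ 2) * corr v a b (D * h) := fun D =>
    Measurable.mul (by fun_prop) ((measurable_corr hv a b).comp (measurable_const_mul D))
  have hm1 : Measurable fun h : ℝ => ENNReal.ofReal (1 / h) := by fun_prop
  have hpt : ∀ h ∈ Ioo h₁ h₂, ENNReal.ofReal X * ENNReal.ofReal (1 / h) ≤
      ∑' d : ℕ, ENNReal.ofReal (wt K (d + 1)) *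
        (ENNReal.ofReal (1 / h ^ 2) * corr v a b ((d + 1 : ℕ) * h))
      + ENNReal.ofReal (X * (4 / η)) * volume Bad * ENNReal.ofReal (1 / h) := by
    intro h hh
    have h0 : 0 < h := h1.trans hh.1
    have hs := sample_step hv hK hvK hη hηb hBad hleft hright h0 (hh.2.le.trans h24)
    rw [← hX] at hs
    have := mul_le_mul_right hs (ENNReal.ofReal (1 / h ^ 2))
    calc _ = ENNReal.ofReal (1 / h ^ 2) * (ENNReal.ofReal X * ENNReal.ofReal h) := by
          have e : ENNReal.ofReal (1 / h) = ENNReal.ofReal (1 / h ^ 2) * ENNReal.ofReal h := by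
            rw [← ENNReal.ofReal_mul (by positivity)]; congr 1; field_simp
          rw [e]; ring
      _ ≤ _ := this
      _ = _ := by
          rw [mul_add, ← ENNReal.tsum_mul_left]
          congr 1
          · refine tsum_congr fun d => ?_
            ring
          · rw [show X * (4 * h / η) = X * (4 / η) * h by ring, ENNReal.ofReal_mul' h0.le]
            rw [show ENNReal.ofReal (1 / h ^ 2) * (ENNReal.ofReal (X * (4 / η)) *
              ENNReal.ofReal h * volume Bad) = ENNReal.ofReal (X * (4 / η)) * volume Bad *
              (ENNReal.ofReal (1 / h ^ 2) * ENNReal.ofReal h) by ring,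
              ← ENNReal.ofReal_mul (by positivity)]
            congr 2; field_simp
  have hint := setLIntegral_mono' (μ := volume) measurableSet_Ioo hpt
  rw [lintegral_const_mul _ hm1, lintegral_one_div h1 h12,
    lintegral_add_right _ (hm1.const_mul _), lintegral_const_mul _ hm1,
    lintegral_one_div h1 h12, lintegral_tsum (fun d => ((hmc _).const_mul _).aemeasurable)] at hint
  refine hint.trans ?_
  gcongr
  have hmi : ∀ D : ℝ, Measurable ((Ioo (D * h₁) (D * h₂)).indicator
      (fun r => ENNReal.ofReal (1 / r ^ 2) * corr v a b r)) := fun D =>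
    (Measurable.mul (by fun_prop) (measurable_corr hv a b)).indicator measurableSet_Ioo
  calc _ = ∑' d : ℕ, ∫⁻ r in Ioi (0 : ℝ), ENNReal.ofReal (((d + 1 : ℕ) : ℝ) * wt K (d + 1)) *
        (Ioo (((d + 1 : ℕ) : ℝ) * h₁) (((d + 1 : ℕ) : ℝ) * h₂)).indicator
          (fun r => ENNReal.ofReal (1 / r ^ 2) * corr v a b r) r := by
        refine tsum_congr fun d => ?_
        rw [lintegral_const_mul _ (hmc _), lintegral_comp_scale (measurable_corr hv a b)
          (by positivity) h₁ h₂ h1, lintegral_const_mul _ (hmi _), ← mul_assoc,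
          ← ENNReal.ofReal_mul (wt_nonneg _ _), mul_comm (wt K (d + 1))]
    _ = ∫⁻ r in Ioi (0 : ℝ), ∑' d : ℕ, ENNReal.ofReal (((d + 1 : ℕ) : ℝ) * wt K (d + 1)) *
        (Ioo (((d + 1 : ℕ) : ℝ) * h₁) (((d + 1 : ℕ) : ℝ) * h₂)).indicator
          (fun r => ENNReal.ofReal (1 / r ^ 2) * corr v a b r) r :=
        (lintegral_tsum fun d => ((hmi _).const_mul _).aemeasurable).symm
    _ ≤ ∫⁻ r in Ioi (0 : ℝ), ENNReal.ofReal (K + 2 + Real.log (h₂ / h₁)) *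
        (ENNReal.ofReal (1 / r ^ 2) * corr v a b r) := by
        refine setLIntegral_mono' measurableSet_Ioi fun r hr => ?_
        refine le_trans (le_of_eq ?_) (mul_le_mul_left (tsum_kernel_le hK h1 h12 hr) _)
        rw [← ENNReal.tsum_mul_right]
        refine tsum_congr fun d => ?_
        by_cases h : r ∈ Ioo (((d + 1 : ℕ) : ℝ) * h₁) (((d + 1 : ℕ) : ℝ) * h₂)
        · rw [if_pos h, indicator_of_mem h]
        · rw [if_neg h, indicator_of_notMem h, mul_zero, zero_mul]
    _ = _ := by
        unfold halfEnergy
        exact lintegral_const_mul _ (Measurable.mul (by fun_prop) (measurable_corr hv a b))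

/-- Lower bound for the energy of hostile pairs of a measurable function with levels
`0, …, K` which, up to a set of small measure, is `0` near the left endpoint and `K` near the
right endpoint. -/
lemma halfEnergy_lower {v : ℝ → ℕ} (hv : Measurable v) {K : ℕ} (hK : 1 ≤ K) (hvK : ∀ x, v x ≤ K)
    {a b η : ℝ} (hη : 0 < η) (hηb : η ≤ b - a) {Bad : Set ℝ} (hBad : MeasurableSet Bad)
    (hleft : ∀ x ∈ Ico a (a + η), x ∉ Bad → v x = 0)
    (hright : ∀ x ∈ Ico (b - η) b, x ∉ Bad → v x = K)
    {τ : ℝ} (hτ : 0 ≤ τ) (hτ1 : τ ≤ 1) (hvol : volume Bad ≤ ENNReal.ofReal (τ * η / 4)) :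
    ENNReal.ofReal ((1 - τ) * (K * Real.log 2 - 8 * ((b - a) / η))) ≤ halfEnergy v a b := by
  rcases eq_or_ne (halfEnergy v a b) ∞ with htop | htop
  · rw [htop]; exact le_top
  set X := K * Real.log 2 - 8 * ((b - a) / η) with hX
  rcases le_or_gt ((1 - τ) * X) 0 with h0 | h0
  · rw [ENNReal.ofReal_of_nonpos h0]; exact zero_le
  rcases le_or_gt X 0 with hX0 | hX0
  · nlinarith
  set I := (halfEnergy v a b).toReal with hI
  have hIe : halfEnergy v a b = ENNReal.ofReal I := (ENNReal.ofReal_toReal htop).symm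
  have hI0 : 0 ≤ I := ENNReal.toReal_nonneg
  have key : ∀ t : ℝ, 0 < t → t * ((1 - τ) * X - I) ≤ (K + 2) * I := by
    intro t ht
    have h2 : (0 : ℝ) < η / 4 := by positivity
    have hlog : Real.log (η / 4 / (η / 4 * Real.exp (-t))) = t := by
      rw [div_mul_cancel_left₀ h2.ne', ← Real.exp_neg, neg_neg, Real.log_exp]
    have hexp : Real.exp (-t) ≤ 1 := Real.exp_le_one_iff.2 (by linarith)
    have := energy_log hv hK hvK hη hηb hBad hleft hright
      (h₁ := η / 4 * Real.exp (-t)) (h₂ := η / 4) (by positivity)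
      (by nlinarith) le_rfl
    rw [hlog, ← hX, hIe] at this
    have h3 := this.trans (add_le_add le_rfl (mul_le_mul_left (mul_le_mul_right hvol _) _))
    rw [← ENNReal.ofReal_mul hX0.le, ← ENNReal.ofReal_mul (by positivity),
      ← ENNReal.ofReal_mul (by positivity), ← ENNReal.ofReal_mul (by positivity),
      ← ENNReal.ofReal_add (by positivity) (by positivity),
      ENNReal.ofReal_le_ofReal_iff (by positivity)] at h3
    have e : X * (4 / η) * (τ * η / 4) * t = X * τ * t := by field_simp
    rw [e] at h3
    linarith
  rw [hIe]
  refine ENNReal.ofReal_le_ofReal ?_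
  by_contra hlt
  push Not at hlt
  have hpos : 0 < (1 - τ) * X - I := by linarith
  have hC : 0 ≤ (K + 2 : ℝ) * I := by positivity
  have := key (((K + 2) * I + 1) / ((1 - τ) * X - I)) (by positivity)
  rw [div_mul_cancel₀ _ hpos.ne'] at this
  linarith

/-- Half of the energy comes from the pairs `x < y`. -/
lemma two_halfEnergy_le {v : ℝ → ℕ} (hv : Measurable v) (a b : ℝ) :
    2 * halfEnergy v a b ≤
      ∫⁻ x, ∫⁻ y, hostInd v a b x y * ENNReal.ofReal (1 / (y - x) ^ 2) := by
  have h1 : ∀ x : ℝ, ∫⁻ y, hostInd v a b x y * ENNReal.ofReal (1 / (y - x) ^ 2)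
      = ∫⁻ r, hostInd v a b x (x + r) * ENNReal.ofReal (1 / r ^ 2) := by
    intro x
    rw [← lintegral_add_left_eq_self _ x]
    simp only [add_sub_cancel_left]
  have hm : Measurable fun p : ℝ × ℝ => hostInd v a b p.1 (p.1 + p.2) :=
    (measurable_hostInd hv a b).comp (measurable_fst.prodMk (measurable_fst.add measurable_snd))
  have hm' : Measurable fun p : ℝ × ℝ =>
      hostInd v a b p.1 (p.1 + p.2) * ENNReal.ofReal (1 / p.2 ^ 2) :=
    hm.mul (by fun_prop)
  simp only [h1]
  rw [lintegral_lintegral_swap hm'.aemeasurable]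
  have h2 : ∀ r : ℝ, ∫⁻ x, hostInd v a b x (x + r) * ENNReal.ofReal (1 / r ^ 2)
      = ENNReal.ofReal (1 / r ^ 2) * corr v a b r := by
    intro r
    rw [lintegral_mul_const' _ _ ENNReal.ofReal_ne_top, mul_comm]; rfl
  simp only [h2]
  have h3 : ∫⁻ r in Iio (0 : ℝ), ENNReal.ofReal (1 / r ^ 2) * corr v a b r = halfEnergy v a b := by
    unfold halfEnergy
    rw [← lintegral_indicator measurableSet_Iio, ← lintegral_indicator measurableSet_Ioi,
      ← lintegral_neg_eq_self]
    refine lintegral_congr fun r => ?_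
    by_cases hr : r ∈ Ioi (0 : ℝ)
    · rw [indicator_of_mem hr, indicator_of_mem (by simpa using hr), corr_neg, neg_sq]
    · rw [indicator_of_notMem hr, indicator_of_notMem (by simpa using hr)]
  calc 2 * halfEnergy v a b
      = halfEnergy v a b + halfEnergy v a b := two_mul _
    _ = ∫⁻ r in Ioi (0 : ℝ) ∪ Iio 0, ENNReal.ofReal (1 / r ^ 2) * corr v a b r := by
        rw [lintegral_union measurableSet_Iio, h3]
        · rfl
        · exact Set.disjoint_left.2 fun x hx hx' => lt_asymm (mem_Ioi.1 hx) (mem_Iio.1 hx')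
    _ ≤ _ := setLIntegral_le_lintegral _ _

/-! ### Grouping the levels -/

lemma count_int {n : ℕ} (hn : 1 ≤ n) (a D : ℤ) :
    ((Finset.range n).filter fun i : ℕ => 2 ≤ (a + D + i) / (n : ℤ) - (a + i) / (n : ℤ)).card ≤
      ((Finset.Ico n (2 * n)).filter fun k : ℕ => (k : ℤ) < D).card := by
  by_cases hD : 2 * (n : ℤ) ≤ D
  · calc _ ≤ (Finset.range n).card := Finset.card_filter_le _ _
      _ = (Finset.Ico n (2 * n)).card := by rw [Finset.card_range, Nat.card_Ico]; omega
      _ = _ := by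
        rw [Finset.filter_true_of_mem]
        intro k hk
        rw [Finset.mem_Ico] at hk
        omega
  · have hn0 : (0 : ℤ) < n := by exact_mod_cast hn
    have hkey : ∀ i : ℕ, 2 ≤ (a + D + i) / (n : ℤ) - (a + i) / (n : ℤ) →
        2 * (n : ℤ) ≤ (a + i) % n + D := by
      intro i hi
      have e := Int.emod_add_mul_ediv (a + i) n
      have e2 := Int.emod_add_mul_ediv (a + D + i) n
      have e3 := Int.emod_nonneg (a + D + i) hn0.ne'
      nlinarith
    refine Finset.card_le_card_of_injOn (fun i : ℕ => ((a + i) % (n : ℤ) + D - n).toNat) ?_ ?_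
    · intro i hi
      simp only [Finset.coe_filter, Finset.mem_range, mem_ofPred_eq] at hi
      have h1 := hkey i hi.2
      have h2 := Int.emod_lt_of_pos (a + i) hn0
      simp only [Finset.coe_filter, Finset.mem_Ico, mem_ofPred_eq]
      omega
    · intro i hi j hj hij
      simp only [Finset.coe_filter, Finset.mem_range, mem_ofPred_eq] at hi hj hij
      have h1 := hkey i hi.2
      have h2 := hkey j hj.2
      have h3 : (a + i) % (n : ℤ) = (a + j) % (n : ℤ) := by omega
      have h4 : (n : ℤ) ∣ (a + j) - (a + i) := Int.ModEq.dvd h3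
      have h5 : (n : ℤ) ∣ (j : ℤ) - i := by simpa using h4
      have h6 := Int.eq_zero_of_abs_lt_dvd h5 (by rw [abs_lt]; omega)
      omega

lemma floor_add_div (α : ℝ) (i n : ℕ) : ⌊(α + i) / n⌋ = (⌊α⌋ + i) / (n : ℤ) := by
  rw [Int.floor_div_natCast, Int.floor_add_natCast]

/-- Among the `n` ways of grouping `n` consecutive integer levels, the number of those that put
`α` and `β` at least two groups apart is at most the number of `k ∈ [n, 2n)` below `|β - α|`. -/
lemma count_offsets {n : ℕ} (hn : 1 ≤ n) (α β : ℝ) :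
    ((Finset.range n).filter fun i : ℕ => 2 ≤ |⌊(β + i) / n⌋ - ⌊(α + i) / n⌋|).card ≤
      ((Finset.Ico n (2 * n)).filter fun k : ℕ => (k : ℝ) < |β - α|).card := by
  wlog h : α ≤ β generalizing α β
  · have := this β α (le_of_not_ge h)
    simpa only [abs_sub_comm] using this
  have hfl : ⌊α⌋ ≤ ⌊β⌋ := Int.floor_le_floor h
  calc _ ≤ ((Finset.range n).filter fun i : ℕ =>
        2 ≤ (⌊α⌋ + (⌊β⌋ - ⌊α⌋) + i) / (n : ℤ) - (⌊α⌋ + i) / (n : ℤ)).card := by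
        refine Finset.card_le_card (Finset.monotone_filter_right _ fun i _ hi => ?_)
        rw [floor_add_div, floor_add_div, abs_of_nonneg] at hi
        · rwa [add_sub_cancel]
        · rw [sub_nonneg]
          exact Int.ediv_le_ediv (by exact_mod_cast hn) (by omega)
    _ ≤ _ := count_int hn _ _
    _ ≤ _ := by
        refine Finset.card_le_card (Finset.monotone_filter_right _ fun k _ hk => ?_)
        rw [abs_of_nonneg (by linarith)]
        have h1 := Int.floor_le β
        have h2 := Int.lt_floor_add_one α
        have h3 : (k : ℝ) + 1 ≤ ⌊β⌋ - ⌊α⌋ := by exact_mod_cast hk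
        linarith

/-! ### Energy of the coarse levels -/

/-- The energy of the pairs of points of `[a, b)` where `g` differs by at least two. -/
noncomputable def farEnergy (g : ℝ → ℤ) (a b : ℝ) : ℝ≥0∞ :=
  ∫⁻ x in Ico a b, ∫⁻ y in Ico a b,
    if 2 ≤ |g y - g x| then ENNReal.ofReal (1 / (y - x) ^ 2) else 0

/-- `halfEnergy_lower` for integer levels, which are first clipped to `[z, z']`. -/
lemma farEnergy_lower {g : ℝ → ℤ} (hg : Measurable g) {z z' : ℤ}
    {a b η : ℝ} (hη : 0 < η) (hηb : η ≤ b - a) {Bad : Set ℝ} (hBad : MeasurableSet Bad)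
    (hleft : ∀ x ∈ Ico a (a + η), x ∉ Bad → g x ≤ z)
    (hright : ∀ x ∈ Ico (b - η) b, x ∉ Bad → z' ≤ g x)
    {τ : ℝ} (hτ : 0 ≤ τ) (hτ1 : τ ≤ 1) (hvol : volume Bad ≤ ENNReal.ofReal (τ * η / 4)) :
    ENNReal.ofReal (2 * ((1 - τ) * ((z' - z) * Real.log 2 - 8 * ((b - a) / η))))
      ≤ farEnergy g a b := by
  have hlog : 0 < Real.log 2 := Real.log_pos (by norm_num)
  rcases le_or_gt z' z with hz | hz
  · rw [ENNReal.ofReal_of_nonpos]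
    · exact zero_le
    · have h1 : (z' : ℝ) - z ≤ 0 := by
        rw [sub_nonpos]; exact_mod_cast hz
      have h2 : 0 ≤ (b - a) / η := div_nonneg (by linarith) hη.le
      have h3 : ((z' : ℝ) - z) * Real.log 2 ≤ 0 := mul_nonpos_of_nonpos_of_nonneg h1 hlog.le
      have h4 : 0 ≤ 1 - τ := by linarith
      nlinarith
  -- clip the levels of `g` to `0, …, K`
  set K := (z' - z).toNat with hK
  have hKr : (K : ℝ) = z' - z := by
    have : (K : ℤ) = z' - z := by omega
    exact_mod_cast this
  set v : ℝ → ℕ := fun x => min K (g x - z).toNat with hvdef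
  have hv : Measurable v :=
    (Measurable.of_discrete (f := fun j : ℤ => min K (j - z).toNat)).comp hg
  have hE := halfEnergy_lower hv (K := K) (by omega) (fun x => min_le_left _ _) hη hηb hBad
    (fun x hx hxB => by have := hleft x hx hxB; simp only [hvdef]; omega)
    (fun x hx hxB => by have := hright x hx hxB; simp only [hvdef]; omega) hτ hτ1 hvol
  rw [hKr] at hE
  rw [ENNReal.ofReal_mul zero_le_two, ENNReal.ofReal_ofNat]
  refine (mul_le_mul_right hE 2).trans ((two_halfEnergy_le hv a b).trans ?_)
  unfold farEnergy
  rw [← lintegral_indicator measurableSet_Ico]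
  refine lintegral_mono fun x => ?_
  by_cases hx : x ∈ Ico a b
  · rw [indicator_of_mem hx, ← lintegral_indicator measurableSet_Ico]
    refine lintegral_mono fun y => ?_
    by_cases hH : (x, y) ∈ hostSet v a b
    · have h2 : 2 ≤ |g y - g x| := by
        have h3 : Hostile (v x) (v y) := hH.2.2
        unfold Hostile at h3
        simp only [hvdef] at h3
        rw [le_abs]
        omega
      rw [indicator_of_mem hH.2.1, if_pos h2]
      unfold hostInd
      rw [indicator_of_mem hH, Pi.one_apply, one_mul]
    · unfold hostInd
      rw [indicator_of_notMem hH, zero_mul]; exact zero_le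
  · rw [indicator_of_notMem hx]
    refine le_of_eq ((lintegral_congr fun y => ?_).trans lintegral_zero)
    unfold hostInd
    rw [indicator_of_notMem (fun h => hx h.1), zero_mul]

/-- The `i`-th coarse quantisation of the values: groups of `n` levels of height `δ`. -/
noncomputable def level (n : ℕ) (δ : ℝ) (i : ℕ) (s : ℝ) : ℤ := ⌊(s / δ + i) / n⌋

lemma level_mono (n : ℕ) {δ : ℝ} (hδ : 0 < δ) (i : ℕ) : Monotone (level n δ i) := by
  intro s t hst
  unfold level
  gcongr

lemma level_sub {n : ℕ} (hn : 1 ≤ n) {δ : ℝ} (hδ : 0 < δ) (i : ℕ) (s t : ℝ) :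
    (t - s) / (n * δ) - 1 ≤ (level n δ i t : ℝ) - level n δ i s := by
  have hn' : (0 : ℝ) < n := by exact_mod_cast hn
  unfold level
  have h1 := Int.lt_floor_add_one ((t / δ + i) / n)
  have h2 := Int.floor_le ((s / δ + i) / n)
  have e : (t - s) / (n * δ) = (t / δ + i) / n - (s / δ + i) / n := by field_simp; ring
  linarith

/-- The contribution of a single offset on an interval where `U` passes from `A` to `B`. -/
lemma offset_piece {U : ℝ → ℝ} (hU : Measurable U) {n : ℕ} (hn : 1 ≤ n) {δ : ℝ} (hδ : 0 < δ)
    (i : ℕ) {a b η : ℝ} (hη : 0 < η) (hηb : η ≤ b - a) {Bad : Set ℝ} (hBad : MeasurableSet Bad)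
    {A B κ : ℝ}
    (hleft : ∀ x ∈ Ico a (a + η), x ∉ Bad → |U x - A| ≤ 2 * κ)
    (hright : ∀ x ∈ Ico (b - η) b, x ∉ Bad → |U x - B| ≤ 2 * κ)
    (hκ : 0 ≤ κ) (hκ1 : κ ≤ 1) (hvol : volume Bad ≤ ENNReal.ofReal (κ * η / 4))
    (hsmall : n * δ * (Real.log 2 + 8 * ((b - a) / η)) ≤ κ) :
    ENNReal.ofReal (2 * ((1 - κ) * ((|B - A| - 4 * κ) * Real.log 2 - κ)))
      ≤ ENNReal.ofReal (n * δ) * farEnergy (fun x => level n δ i (U x)) a b := by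
  have hn' : (0 : ℝ) < n := by exact_mod_cast hn
  have hlog : 0 < Real.log 2 := Real.log_pos (by norm_num)
  have hlm := level_mono n hδ i
  have hm : Measurable fun x => level n δ i (U x) := hlm.measurable.comp hU
  have main : ENNReal.ofReal (2 * ((1 - κ) * (((|B - A| - 4 * κ) / (n * δ) - 1) * Real.log 2
      - 8 * ((b - a) / η)))) ≤ farEnergy (fun x => level n δ i (U x)) a b := by
    rcases le_total A B with hAB | hAB
    · refine le_trans (ENNReal.ofReal_le_ofReal ?_) (farEnergy_lower hm
        (z := level n δ i (A + 2 * κ)) (z' := level n δ i (B - 2 * κ)) hη hηb hBad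
        (fun x hx hxB => hlm ?_) (fun x hx hxB => hlm ?_) hκ hκ1 hvol)
      · have := level_sub hn hδ i (A + 2 * κ) (B - 2 * κ)
        rw [abs_of_nonneg (by linarith)]
        have e : B - 2 * κ - (A + 2 * κ) = B - A - 4 * κ := by ring
        rw [e] at this
        have h1 : 0 ≤ 1 - κ := by linarith
        gcongr
      · have := (abs_le.1 (hleft x hx hxB)).2
        linarith
      · have := (abs_le.1 (hright x hx hxB)).1
        linarith
    · -- a decreasing piece: reverse the order of the levels
      have hneg : farEnergy (fun x => level n δ i (U x)) a b
          = farEnergy (fun x => -level n δ i (U x)) a b := by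
        unfold farEnergy
        refine lintegral_congr fun x => lintegral_congr fun y => ?_
        have e : -level n δ i (U y) - -level n δ i (U x)
          = -(level n δ i (U y) - level n δ i (U x)) := by ring
        rw [e, abs_neg]
      rw [hneg]
      refine le_trans (ENNReal.ofReal_le_ofReal ?_) (farEnergy_lower hm.neg
        (z := -level n δ i (A - 2 * κ)) (z' := -level n δ i (B + 2 * κ)) hη hηb hBad
        (fun x hx hxB => neg_le_neg (hlm ?_)) (fun x hx hxB => neg_le_neg (hlm ?_)) hκ hκ1 hvol)
      · have := level_sub hn hδ i (B + 2 * κ) (A - 2 * κ)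
        rw [abs_of_nonpos (by linarith)]
        have e : A - 2 * κ - (B + 2 * κ) = -(B - A) - 4 * κ := by ring
        rw [e] at this
        have h1 : 0 ≤ 1 - κ := by linarith
        push_cast
        rw [neg_sub_neg]
        gcongr
      · have := (abs_le.1 (hleft x hx hxB)).1
        linarith
      · have := (abs_le.1 (hright x hx hxB)).2
        linarith
  refine le_trans ?_ (mul_le_mul_right main (ENNReal.ofReal (n * δ)))
  rw [← ENNReal.ofReal_mul (by positivity)]
  refine ENNReal.ofReal_le_ofReal ?_
  have e : n * δ * (2 * ((1 - κ) * (((|B - A| - 4 * κ) / (n * δ) - 1) * Real.log 2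
      - 8 * ((b - a) / η)))) = 2 * ((1 - κ) * ((|B - A| - 4 * κ) * Real.log 2
        - n * δ * (Real.log 2 + 8 * ((b - a) / η)))) := by
    field_simp; ring
  rw [e]
  have h1 : 0 ≤ 1 - κ := by linarith
  gcongr

/-- The law dominates the sum of the interactions of the coarse levels. -/
lemma kernel_ge {n : ℕ} (hn : 1 ≤ n) {δ : ℝ} (hδ : 0 < δ) {φ : ℝ → ℝ}
    (hφ : ∀ t, φ t = ((Finset.Ico n (2 * n)).filter fun k : ℕ => (k : ℝ) < t).card)
    (s t r : ℝ) :
    ∑ i ∈ Finset.range n, ENNReal.ofReal δ *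
      (if 2 ≤ |level n δ i t - level n δ i s| then ENNReal.ofReal (1 / r ^ 2) else 0)
      ≤ ENNReal.ofReal (φ (|t - s| / δ) * δ ^ (1 : ℝ) / |r| ^ (1 + 1 : ℝ)) := by
  have hc := count_offsets hn (s / δ) (t / δ)
  rw [← sub_div, abs_div, abs_of_pos hδ] at hc
  rw [hφ, Real.rpow_one]
  have e : |r| ^ (1 + 1 : ℝ) = r ^ 2 := by
    rw [show (1 + 1 : ℝ) = (2 : ℕ) by norm_num, Real.rpow_natCast, sq_abs]
  rw [e, ← Finset.mul_sum, ← Finset.sum_filter, Finset.sum_const, nsmul_eq_mul,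
    ← ENNReal.ofReal_natCast, ← ENNReal.ofReal_mul (by positivity),
    ← ENNReal.ofReal_mul hδ.le]
  refine ENNReal.ofReal_le_ofReal ?_
  have hc' : ((((Finset.range n).filter fun i : ℕ =>
      2 ≤ |level n δ i t - level n δ i s|).card : ℕ) : ℝ) ≤
      ((Finset.Ico n (2 * n)).filter fun k : ℕ => (k : ℝ) < |t - s| / δ).card := by
    exact_mod_cast hc
  calc _ = ((((Finset.range n).filter fun i : ℕ =>
      2 ≤ |level n δ i t - level n δ i s|).card : ℕ) : ℝ) * (δ / r ^ 2) := by ring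
    _ ≤ ((Finset.Ico n (2 * n)).filter fun k : ℕ => (k : ℝ) < |t - s| / δ).card * (δ / r ^ 2) := by
      gcongr
    _ = _ := by ring

lemma measurable_far {g : ℝ → ℤ} (hg : Measurable g) : Measurable fun p : ℝ × ℝ =>
    if 2 ≤ |g p.2 - g p.1| then ENNReal.ofReal (1 / (p.2 - p.1) ^ 2) else 0 := by
  refine Measurable.ite ?_ (by fun_prop) measurable_const
  exact ((hg.comp measurable_fst).prodMk (hg.comp measurable_snd))
    (MeasurableSet.of_discrete (s := {q : ℤ × ℤ | 2 ≤ |q.2 - q.1|}))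

lemma measurable_far_right {g : ℝ → ℤ} (hg : Measurable g) (x : ℝ) : Measurable fun y : ℝ =>
    if 2 ≤ |g y - g x| then ENNReal.ofReal (1 / (y - x) ^ 2) else 0 :=
  (measurable_far hg).comp measurable_prodMk_left

lemma measurable_far_left {g : ℝ → ℤ} (hg : Measurable g) (a b : ℝ) : Measurable fun x : ℝ =>
    ∫⁻ y in Ico a b, if 2 ≤ |g y - g x| then ENNReal.ofReal (1 / (y - x) ^ 2) else 0 :=
  Measurable.lintegral_prod_right' (f := fun p : ℝ × ℝ =>
    if 2 ≤ |g p.2 - g p.1| then ENNReal.ofReal (1 / (p.2 - p.1) ^ 2) else 0) (measurable_far hg)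

/-- Summing the contributions of all the offsets. -/
lemma interval_piece {U : ℝ → ℝ} (hU : Measurable U) {n : ℕ} (hn : 1 ≤ n) {δ : ℝ} (hδ : 0 < δ)
    {φ : ℝ → ℝ}
    (hφ : ∀ t, φ t = ((Finset.Ico n (2 * n)).filter fun k : ℕ => (k : ℝ) < t).card)
    {a b η : ℝ} (hη : 0 < η) (hηb : η ≤ b - a) {Bad : Set ℝ} (hBad : MeasurableSet Bad)
    {A B κ : ℝ}
    (hleft : ∀ x ∈ Ico a (a + η), x ∉ Bad → |U x - A| ≤ 2 * κ)
    (hright : ∀ x ∈ Ico (b - η) b, x ∉ Bad → |U x - B| ≤ 2 * κ)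
    (hκ : 0 ≤ κ) (hκ1 : κ ≤ 1) (hvol : volume Bad ≤ ENNReal.ofReal (κ * η / 4))
    (hsmall : n * δ * (Real.log 2 + 8 * ((b - a) / η)) ≤ κ) :
    ENNReal.ofReal (2 * ((1 - κ) * ((|B - A| - 4 * κ) * Real.log 2 - κ)))
      ≤ Lambda1 φ 1 δ U (Ico a b) := by
  set T := ENNReal.ofReal (2 * ((1 - κ) * ((|B - A| - 4 * κ) * Real.log 2 - κ))) with hT
  have hm : ∀ i, Measurable fun x => level n δ i (U x) := fun i =>
    (level_mono n hδ i).measurable.comp hU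
  have h1 : ∑ i ∈ Finset.range n, ENNReal.ofReal δ * farEnergy (fun x => level n δ i (U x)) a b
      ≤ Lambda1 φ 1 δ U (Ico a b) := by
    unfold farEnergy Lambda1
    have hmf : ∀ i x, Measurable fun y : ℝ =>
        if 2 ≤ |level n δ i (U y) - level n δ i (U x)| then
          ENNReal.ofReal (1 / (y - x) ^ 2) else 0 := fun i x =>
      measurable_far_right (hm i) x
    have hmf2 : ∀ i, Measurable fun x : ℝ => ∫⁻ y in Ico a b,
        if 2 ≤ |level n δ i (U y) - level n δ i (U x)| then
          ENNReal.ofReal (1 / (y - x) ^ 2) else 0 := fun i =>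
      measurable_far_left (hm i) a b
    calc _ = ∫⁻ x in Ico a b, ∫⁻ y in Ico a b, ∑ i ∈ Finset.range n, ENNReal.ofReal δ *
          (if 2 ≤ |level n δ i (U y) - level n δ i (U x)| then
            ENNReal.ofReal (1 / (y - x) ^ 2) else 0) := by
          have : ∀ x, ∫⁻ y in Ico a b, ∑ i ∈ Finset.range n, ENNReal.ofReal δ *
            (if 2 ≤ |level n δ i (U y) - level n δ i (U x)| then
            ENNReal.ofReal (1 / (y - x) ^ 2) else 0) = ∑ i ∈ Finset.range n, ENNReal.ofReal δ *
            ∫⁻ y in Ico a b, (if 2 ≤ |level n δ i (U y) - level n δ i (U x)| then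
            ENNReal.ofReal (1 / (y - x) ^ 2) else 0) := by
            intro x
            rw [lintegral_finsetSum _ fun i _ => (hmf i x).const_mul _]
            exact Finset.sum_congr rfl fun i _ => lintegral_const_mul _ (hmf i x)
          simp only [this]
          rw [lintegral_finsetSum _ fun i _ => (hmf2 i).const_mul _]
          exact Finset.sum_congr rfl fun i _ => (lintegral_const_mul _ (hmf2 i)).symm
      _ ≤ _ := lintegral_mono fun x => lintegral_mono fun y => kernel_ge hn hδ hφ _ _ _
  refine le_trans ?_ h1
  have hn0 : (n : ℝ≥0∞) ≠ 0 := by exact_mod_cast (by omega : n ≠ 0)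
  rw [← ENNReal.mul_le_mul_iff_right hn0 (ENNReal.natCast_ne_top n)]
  calc (n : ℝ≥0∞) * T = ∑ i ∈ Finset.range n, T := by simp
    _ ≤ ∑ i ∈ Finset.range n, ENNReal.ofReal (n * δ) *
          farEnergy (fun x => level n δ i (U x)) a b :=
        Finset.sum_le_sum fun i _ =>
          offset_piece hU hn hδ i hη hηb hBad hleft hright hκ hκ1 hvol hsmall
    _ = _ := by
        rw [Finset.mul_sum]
        refine Finset.sum_congr rfl fun i _ => ?_
        rw [ENNReal.ofReal_mul (by positivity), ENNReal.ofReal_natCast, mul_assoc]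

/-! ### The lower bound for the liminf -/

lemma eventually_interval {u : ℝ → ℝ} (hu : AEStronglyMeasurable u) {U : ℝ → ℝ → ℝ}
    (hU : ∀ δ > (0 : ℝ), Measurable (U δ))
    (hlim : Tendsto (fun δ : ℝ => eLpNorm (fun x => U δ x - u x) 1 volume) (𝓝[>] 0) (𝓝 0))
    {n : ℕ} (hn : 1 ≤ n) {φ : ℝ → ℝ}
    (hφ : ∀ t, φ t = ((Finset.Ico n (2 * n)).filter fun k : ℕ => (k : ℝ) < t).card)
    {a b η A B κ : ℝ} (hη : 0 < η) (hηb : η ≤ b - a) (hκ : 0 < κ) (hκ1 : κ ≤ 1)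
    (hleft : ∀ x ∈ Ico a (a + η), |u x - A| ≤ κ)
    (hright : ∀ x ∈ Ico (b - η) b, |u x - B| ≤ κ) :
    ∀ᶠ δ in 𝓝[>] (0 : ℝ),
      ENNReal.ofReal (2 * ((1 - κ) * ((|B - A| - 4 * κ) * Real.log 2 - κ)))
        ≤ Lambda1 φ 1 δ (U δ) (Ico a b) := by
  have hnorm : ∀ᶠ δ in 𝓝[>] (0 : ℝ), eLpNorm (fun x => U δ x - u x) 1 volume ≤
      ENNReal.ofReal (κ * (κ * η / 4)) :=
    hlim.eventually_le_const (ENNReal.ofReal_pos.2 (by positivity))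
  have hsm : ∀ᶠ δ in 𝓝[>] (0 : ℝ), n * δ * (Real.log 2 + 8 * ((b - a) / η)) ≤ κ := by
    have : Tendsto (fun δ : ℝ => n * δ * (Real.log 2 + 8 * ((b - a) / η))) (𝓝[>] 0)
        (𝓝 (n * 0 * (Real.log 2 + 8 * ((b - a) / η)))) :=
      (Continuous.tendsto (by fun_prop) 0).mono_left nhdsWithin_le_nhds
    exact this.eventually_le_const (by simpa using hκ)
  filter_upwards [hnorm, hsm, self_mem_nhdsWithin] with δ h1 h2 hδ
  have hδ0 : 0 < δ := hδ
  -- the set where `U δ` is not close to `u` is small by Markov's inequality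
  set S := {x | ENNReal.ofReal κ ≤ ‖U δ x - u x‖ₑ} with hS
  have hSc : ∀ x ∉ toMeasurable volume S, |U δ x - u x| ≤ κ := by
    intro x hx
    have : ¬ ENNReal.ofReal κ ≤ ‖U δ x - u x‖ₑ := fun h => hx (subset_toMeasurable _ _ h)
    rw [Real.enorm_eq_ofReal_abs, ENNReal.ofReal_le_ofReal_iff (abs_nonneg _)] at this
    exact (not_le.1 this).le
  have hmeas : AEMeasurable (fun x => ‖U δ x - u x‖ₑ) volume :=
    ((hU δ hδ0).aestronglyMeasurable.sub hu).enorm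
  have hmarkov := (mul_meas_ge_le_lintegral₀ hmeas (ENNReal.ofReal κ)).trans
    (eLpNorm_one_eq_lintegral_enorm.symm.le.trans h1)
  rw [ENNReal.ofReal_mul hκ.le, ENNReal.mul_le_mul_iff_right (ENNReal.ofReal_pos.2 hκ).ne'
    ENNReal.ofReal_ne_top] at hmarkov
  refine interval_piece (hU δ hδ0) hn hδ0 hφ hη hηb (measurableSet_toMeasurable volume S)
    (fun x hx hxB => ?_) (fun x hx hxB => ?_) hκ.le hκ1
    (by rw [measure_toMeasurable]; exact hmarkov) h2
  · calc |U δ x - A| = |(U δ x - u x) + (u x - A)| := by ring_nf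
      _ ≤ |U δ x - u x| + |u x - A| := abs_add_le _ _
      _ ≤ 2 * κ := by linarith [hSc x hxB, hleft x hx]
  · calc |U δ x - B| = |(U δ x - u x) + (u x - B)| := by ring_nf
      _ ≤ |U δ x - u x| + |u x - B| := abs_add_le _ _
      _ ≤ 2 * κ := by linarith [hSc x hxB, hright x hx]

lemma sum_Lambda1_le (φ : ℝ → ℝ) (p δ : ℝ) (U : ℝ → ℝ) {y : ℕ → ℝ} (hy : Monotone y) (N : ℕ) :
    ∑ q ∈ Finset.range N, Lambda1 φ p δ U (Ico (y q) (y (q + 1))) ≤ Lambda1 φ p δ U univ := by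
  have hdisj := hy.pairwise_disjoint_on_Ico_succ
  unfold Lambda1
  rw [Measure.restrict_univ]
  calc _ ≤ ∑ q ∈ Finset.range N, ∫⁻ x in Ico (y q) (y (q + 1)), ∫⁻ z,
        ENNReal.ofReal (φ (|U z - U x| / δ) * δ ^ p / |z - x| ^ (1 + p)) :=
        Finset.sum_le_sum fun q _ => lintegral_mono fun x => setLIntegral_le_lintegral _ _
    _ = ∫⁻ x in ⋃ q ∈ Finset.range N, Ico (y q) (y (q + 1)), ∫⁻ z,
        ENNReal.ofReal (φ (|U z - U x| / δ) * δ ^ p / |z - x| ^ (1 + p)) :=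
        (lintegral_biUnion_finset (fun i _ j _ hij => hdisj hij)
          (fun _ _ => measurableSet_Ico) _).symm
    _ ≤ _ := setLIntegral_le_lintegral _ _

/-- A common size for the right windows at finitely many points. -/
lemma right_window {u : ℝ → ℝ} (hc : ∀ x : ℝ, ContinuousWithinAt u (Ici x) x) {κ : ℝ}
    (hκ : 0 < κ) (y : ℕ → ℝ) (N : ℕ) :
    ∃ η > 0, ∀ q ∈ Finset.range (N + 1), ∀ x ∈ Ico (y q) (y q + η), |u x - u (y q)| ≤ κ := by
  have h : ∀ᶠ η in 𝓝[>] (0 : ℝ), ∀ q ∈ Finset.range (N + 1),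
      ∀ x ∈ Ico (y q) (y q + η), |u x - u (y q)| ≤ κ := by
    rw [Filter.eventually_all_finset]
    intro q _
    obtain ⟨r, hr, h⟩ := Metric.continuousWithinAt_iff.1 (hc (y q)) κ hκ
    filter_upwards [Ioo_mem_nhdsGT hr] with η hη x hx
    have := h hx.1 (by rw [Real.dist_eq, abs_of_nonneg (by linarith [hx.1])]; linarith [hx.2, hη.2])
    rw [Real.dist_eq] at this
    exact this.le
  obtain ⟨η, h1, h2⟩ := (h.and self_mem_nhdsWithin).exists
  exact ⟨η, h2, h1⟩

/-- Each interval of the partition is shifted by half a window, so that both of its ends lie well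
inside windows. -/
lemma eventually_partition {u : ℝ → ℝ} (hu : AEStronglyMeasurable u)
    (hc : ∀ x : ℝ, ContinuousWithinAt u (Ici x) x) {U : ℝ → ℝ → ℝ}
    (hU : ∀ δ > (0 : ℝ), Measurable (U δ))
    (hlim : Tendsto (fun δ : ℝ => eLpNorm (fun x => U δ x - u x) 1 volume) (𝓝[>] 0) (𝓝 0))
    {n : ℕ} (hn : 1 ≤ n) {φ : ℝ → ℝ}
    (hφ : ∀ t, φ t = ((Finset.Ico n (2 * n)).filter fun k : ℕ => (k : ℝ) < t).card)
    {y : ℕ → ℝ} (hy : Monotone y) (N : ℕ) {κ : ℝ} (hκ : 0 < κ) (hκ1 : κ ≤ 1) :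
    ∀ᶠ δ in 𝓝[>] (0 : ℝ), ∑ q ∈ Finset.range N,
      ENNReal.ofReal (2 * ((1 - κ) * ((|u (y (q + 1)) - u (y q)| - 4 * κ) * Real.log 2 - κ)))
        ≤ Lambda1 φ 1 δ (U δ) univ := by
  obtain ⟨η, hη, hwin⟩ := right_window hc hκ y N
  have hall : ∀ᶠ δ in 𝓝[>] (0 : ℝ), ∀ q ∈ Finset.range N,
      ENNReal.ofReal (2 * ((1 - κ) * ((|u (y (q + 1)) - u (y q)| - 4 * κ) * Real.log 2 - κ)))
        ≤ Lambda1 φ 1 δ (U δ) (Ico (y q + η / 2) (y (q + 1) + η / 2)) := by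
    rw [Filter.eventually_all_finset]
    intro q hq
    rw [Finset.mem_range] at hq
    rcases (hy (Nat.le_add_right q 1)).eq_or_lt with heq | hlt
    · refine Eventually.of_forall fun δ => ?_
      rw [← heq, sub_self, abs_zero, ENNReal.ofReal_of_nonpos]
      · exact zero_le
      · have hlog : 0 < Real.log 2 := Real.log_pos (by norm_num)
        have h1 : 0 ≤ 1 - κ := by linarith
        have h2 : (0 - 4 * κ) * Real.log 2 - κ ≤ 0 := by nlinarith
        nlinarith
    · have hl := hwin q (by rw [Finset.mem_range]; omega)
      have hr := hwin (q + 1) (by rw [Finset.mem_range]; omega)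
      have hm1 := min_le_left (η / 2) (y (q + 1) - y q)
      have hm2 := min_le_right (η / 2) (y (q + 1) - y q)
      refine eventually_interval hu hU hlim hn hφ (η := min (η / 2) (y (q + 1) - y q))
        (lt_min (by positivity) (by linarith)) (by linarith) hκ hκ1
        (fun x hx => hl x ⟨by linarith [hx.1], by linarith [hx.2]⟩)
        (fun x hx => hr x ⟨by linarith [hx.1], by linarith [hx.2]⟩)
  filter_upwards [hall] with δ hδ
  exact (Finset.sum_le_sum hδ).trans
    (sum_Lambda1_le φ 1 δ (U δ) (y := fun q => y q + η / 2) (fun i j hij => by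
      have := hy hij
      simp only; linarith) N)

/-- The lower bound with the constant `2 log 2` for the law `φ_n + ⋯ + φ_{2n-1}`. -/
lemma liminf_lower {u : ℝ → ℝ} (hu : AEStronglyMeasurable u)
    (hc : ∀ x : ℝ, ContinuousWithinAt u (Ici x) x) {U : ℝ → ℝ → ℝ}
    (hU : ∀ δ > (0 : ℝ), Measurable (U δ))
    (hlim : Tendsto (fun δ : ℝ => eLpNorm (fun x => U δ x - u x) 1 volume) (𝓝[>] 0) (𝓝 0))
    {n : ℕ} (hn : 1 ≤ n) {φ : ℝ → ℝ}
    (hφ : ∀ t, φ t = ((Finset.Ico n (2 * n)).filter fun k : ℕ => (k : ℝ) < t).card) :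
    ENNReal.ofReal (2 * Real.log 2) * eVariationOn u univ ≤
      liminf (fun δ : ℝ => Lambda1 φ 1 δ (U δ) univ) (𝓝[>] 0) := by
  have hlog : 0 < Real.log 2 := Real.log_pos (by norm_num)
  unfold eVariationOn
  rw [ENNReal.mul_iSup]
  refine iSup_le fun ⟨N, y, hy, _⟩ => ?_
  have hκ : ∀ᶠ κ in 𝓝[>] (0 : ℝ), ∑ q ∈ Finset.range N,
      ENNReal.ofReal (2 * ((1 - κ) * ((|u (y (q + 1)) - u (y q)| - 4 * κ) * Real.log 2 - κ)))
        ≤ liminf (fun δ : ℝ => Lambda1 φ 1 δ (U δ) univ) (𝓝[>] 0) := by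
    filter_upwards [Ioo_mem_nhdsGT one_pos] with κ hκ
    exact le_liminf_of_le (by isBoundedDefault)
      (eventually_partition hu hc hU hlim hn hφ hy N hκ.1 hκ.2.le)
  have hcont : Tendsto (fun κ : ℝ => ∑ q ∈ Finset.range N,
      ENNReal.ofReal (2 * ((1 - κ) * ((|u (y (q + 1)) - u (y q)| - 4 * κ) * Real.log 2 - κ))))
      (𝓝[>] 0) (𝓝 (∑ q ∈ Finset.range N, ENNReal.ofReal
        (2 * ((1 - 0) * ((|u (y (q + 1)) - u (y q)| - 4 * 0) * Real.log 2 - 0))))) := by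
    refine tendsto_finsetSum _ fun q _ => ENNReal.tendsto_ofReal ?_
    have hf : Continuous fun κ : ℝ =>
        2 * ((1 - κ) * ((|u (y (q + 1)) - u (y q)| - 4 * κ) * Real.log 2 - κ)) := by fun_prop
    exact (hf.tendsto 0).mono_left nhdsWithin_le_nhds
  refine le_trans (le_of_eq ?_) (le_of_tendsto hcont hκ)
  rw [Finset.mul_sum]
  refine Finset.sum_congr rfl fun q _ => ?_
  rw [edist_dist, Real.dist_eq, ← ENNReal.ofReal_mul (by positivity)]
  congr 1; ring

/-! ### The scale factor and the choice of the law -/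

lemma phik_div_sq (k : ℝ) : ∀ t ∈ Ioi (0 : ℝ),
    phik k t / t ^ 2 = (Ioi k).indicator (fun t : ℝ => t ^ (-2 : ℝ)) t := by
  intro t ht
  unfold phik
  have e : t ^ (-2 : ℝ) = 1 / t ^ 2 := by
    rw [Real.rpow_neg (mem_Ioi.1 ht).le, one_div]; norm_cast
  by_cases h : t ≤ k
  · rw [if_pos h, indicator_of_notMem (by simpa using h), zero_div]
  · rw [if_neg h, indicator_of_mem (by simpa using h), e]

lemma integrable_phik {k : ℝ} (hk : 0 < k) :
    IntegrableOn (fun t => phik k t / t ^ 2) (Ioi 0) := by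
  rw [integrableOn_congr_fun (phik_div_sq k) measurableSet_Ioi]
  exact ((integrable_indicator_iff measurableSet_Ioi).2
    (integrableOn_Ioi_rpow_of_lt (by norm_num) hk)).integrableOn

lemma integral_phik {k : ℝ} (hk : 0 < k) : ∫ t in Ioi (0 : ℝ), phik k t / t ^ 2 = 1 / k := by
  rw [setIntegral_congr_fun measurableSet_Ioi (phik_div_sq k),
    setIntegral_indicator measurableSet_Ioi, Ioi_inter_Ioi, max_eq_right hk.le,
    integral_Ioi_rpow_of_lt (by norm_num) hk]
  norm_num
  rw [Real.rpow_neg_one]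

/-- The scale factor of `φ_k` is `1 / k`. -/
lemma Nconst_sum (s : Finset ℕ) (hs : ∀ k ∈ s, 1 ≤ k) (lam : ℕ → ℝ) :
    Nconst (fun t => ∑ k ∈ s, lam k * phik k t) = ∑ k ∈ s, lam k * (1 / k) := by
  have hpos : ∀ k ∈ s, (0 : ℝ) < k := fun k hk => by exact_mod_cast hs k hk
  unfold Nconst
  simp only [Finset.sum_div, mul_div_assoc]
  rw [integral_finsetSum _ fun k hk => (integrable_phik (hpos k hk)).const_mul _]
  refine Finset.sum_congr rfl fun k hk => ?_
  rw [integral_const_mul, integral_phik (hpos k hk)]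

lemma sum_one_div_le {n : ℕ} (hn : 1 ≤ n) (N : ℕ) (hN : n ≤ N) :
    ∑ k ∈ Finset.Ico n N, 1 / (k : ℝ) ≤ 1 / n - 1 / N + Real.log (N / n) := by
  have hn' : (0 : ℝ) < n := by exact_mod_cast hn
  induction N, hN using Nat.le_induction with
  | base => simp [hn'.ne']
  | succ N hN ih =>
    have hN' : (0 : ℝ) < N := by exact_mod_cast (by omega : 0 < N)
    rw [Finset.sum_Ico_succ_top hN]
    have e1 : Real.log ((N + 1 : ℕ) / n) = Real.log (N / n) + Real.log ((N + 1) / N) := by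
      rw [← Real.log_mul (by positivity) (by positivity)]
      congr 1; push_cast; field_simp
    have e2 : 1 - ((N + 1) / (N : ℝ))⁻¹ ≤ Real.log ((N + 1) / N) :=
      Real.one_sub_inv_le_log_of_pos (by positivity)
    have e3 : 1 - ((N + 1) / (N : ℝ))⁻¹ = 1 / ((N + 1 : ℕ) : ℝ) := by
      push_cast; field_simp; ring
    linarith

lemma sum_dyadic_le {n : ℕ} (hn : 1 ≤ n) :
    ∑ k ∈ Finset.Ico n (2 * n), 1 / (k : ℝ) ≤ Real.log 2 + 1 / n := by
  have hn' : (0 : ℝ) < n := by exact_mod_cast hn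
  have := sum_one_div_le hn (2 * n) (by omega)
  have e : ((2 * n : ℕ) : ℝ) / n = 2 := by push_cast; field_simp
  rw [e] at this
  have : (0 : ℝ) ≤ 1 / ((2 * n : ℕ) : ℝ) := by positivity
  linarith

lemma sum_dyadic (M : ℕ) (f : ℕ → ℝ) :
    ∑ k ∈ Finset.Icc 1 (2 ^ (M + 1) - 1),
      (if 2 ^ M ≤ k ∧ k < 2 ^ (M + 1) then (1 : ℝ) else 0) * f k
      = ∑ k ∈ Finset.Ico (2 ^ M) (2 * 2 ^ M), f k := by
  simp only [ite_mul, one_mul, zero_mul]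
  rw [← Finset.sum_filter]
  refine Finset.sum_congr ?_ fun _ _ => rfl
  ext k
  have : 1 ≤ 2 ^ M := Nat.one_le_two_pow
  rw [Finset.mem_filter, Finset.mem_Icc, Finset.mem_Ico, pow_succ]
  omega

/-- The law at `t` is the number of `k ∈ [n, 2n)` below `t`, with `n = 2 ^ M`. -/
lemma law_eq (M : ℕ) (t : ℝ) :
    ∑ k ∈ (Finset.Icc 1 (2 ^ (M + 1) - 1) : Finset ℕ),
      (if 2 ^ M ≤ k ∧ k < 2 ^ (M + 1) then (1 : ℝ) else 0) * phik (k : ℝ) t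
      = ((Finset.Ico (2 ^ M) (2 * 2 ^ M)).filter fun k : ℕ => (k : ℝ) < t).card := by
  rw [Finset.card_filter, sum_dyadic M (fun k => phik (k : ℝ) t)]
  push_cast
  refine Finset.sum_congr rfl fun k _ => ?_
  unfold phik
  by_cases h : t ≤ k
  · rw [if_pos h, if_neg (not_lt.2 h)]
  · rw [if_neg h, if_pos (not_le.1 h)]

/-- the supremum of the shape factors over `𝒫𝒞𝒜₂` equals 1: for every
`ε ∈ (0,1)` there is an interaction law in `𝒫𝒞𝒜₂` whose Gamma-liminf is at least
`(1-ε)·2·N(φ)·TV(u)`. -/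
theorem sup_shape_factor_PCA2 (ε : ℝ) (hε : ε ∈ Set.Ioo (0 : ℝ) 1) :
    ∃ m : ℕ, 1 ≤ m ∧ ∃ lam : ℕ → ℝ,
      (∀ k ∈ Finset.Icc 1 (2 ^ m - 1), 0 ≤ lam k) ∧
      (∃ k ∈ Finset.Icc 1 (2 ^ m - 1), lam k ≠ 0) ∧
      (∀ j < m, ∀ k : ℕ, 2 ^ j ≤ k → k < 2 ^ (j + 1) → lam k = lam (2 ^ j)) ∧
      (∀ u : ℝ → ℝ, Integrable u → (∀ x : ℝ, ContinuousWithinAt u (Set.Ici x) x) →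
        ∀ U : ℝ → ℝ → ℝ, (∀ δ > (0 : ℝ), Measurable (U δ)) →
        Tendsto (fun δ : ℝ => eLpNorm (fun x => U δ x - u x) 1 volume) (𝓝[>] 0) (𝓝 0) →
        ENNReal.ofReal ((1 - ε) * 2 *
            Nconst (fun t => ∑ k ∈ Finset.Icc 1 (2 ^ m - 1), lam k * phik (k : ℝ) t)) *
            eVariationOn u Set.univ ≤
          Filter.liminf (fun δ : ℝ =>
            Lambda1 (fun t => ∑ k ∈ Finset.Icc 1 (2 ^ m - 1), lam k * phik (k : ℝ) t)
              1 δ (U δ) Set.univ) (𝓝[>] 0)) := by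
  have hlog : 0 < Real.log 2 := Real.log_pos (by norm_num)
  -- `n = 2 ^ M` is taken so large that `1 / n ≤ ε * log 2`
  obtain ⟨M, hM⟩ := exists_pow_lt_of_lt_one (mul_pos hε.1 hlog) (show (1 / 2 : ℝ) < 1 by norm_num)
  have hn : 1 ≤ 2 ^ M := Nat.one_le_two_pow
  refine ⟨M + 1, by omega, fun k => if 2 ^ M ≤ k ∧ k < 2 ^ (M + 1) then 1 else 0, ?_, ?_, ?_, ?_⟩
  · intro k _
    dsimp only
    split_ifs <;> norm_num
  · refine ⟨2 ^ M, ?_, ?_⟩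
    · rw [Finset.mem_Icc, pow_succ]; omega
    · have : 2 ^ M < 2 ^ (M + 1) := by rw [pow_succ]; omega
      simp [this]
  · intro j hj k h1 h2
    dsimp only
    rcases (Nat.lt_add_one_iff.1 hj).eq_or_lt with rfl | hlt
    · rw [if_pos ⟨h1, h2⟩, if_pos ⟨le_rfl, h1.trans_lt h2⟩]
    · have h3 : 2 ^ (j + 1) ≤ 2 ^ M := Nat.pow_le_pow_right (by norm_num) hlt
      rw [if_neg (fun h => by omega), if_neg (fun h => by omega)]
  · intro u hu hc U hU hlim
    refine le_trans (mul_le_mul_left (ENNReal.ofReal_le_ofReal ?_) _)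
      (liminf_lower hu.aestronglyMeasurable hc hU hlim hn (law_eq M))
    rw [Nconst_sum _ (fun k hk => (Finset.mem_Icc.1 hk).1), sum_dyadic M (fun k => 1 / (k : ℝ))]
    have h1 := sum_dyadic_le hn
    have h2 : 1 / ((2 ^ M : ℕ) : ℝ) = (1 / 2) ^ M := by push_cast; rw [one_div_pow]
    rw [h2] at h1
    have h3 : 0 < 1 - ε := by linarith [hε.2]
    -- `(1 - ε) (1 + ε) ≤ 1`
    have h4 := mul_le_mul_of_nonneg_left (h1.trans (add_le_add le_rfl hM.le)) h3.le
    nlinarith [mul_nonneg (sq_nonneg ε) hlog.le]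
end

section
/- Let u ∈ C¹_c(ℝ) (continuously differentiable with compact support), and for δ > 0 let S_δ u(x) := δ⌊u(x)/δ⌋ be its vertical δ-segmentation. Then S_δ u → u in L¹(ℝ) as δ → 0⁺, and lim_{δ→0⁺} Λ_{δ,1}(φ_1, S_δ u, ℝ) = 2 log 2 · ∫_ℝ |u'(x)| dx. -/
/-!
Only pairs `x, y` whose segmentation levels differ by at least `2` contribute to `Λ`. Substituting
`y = x + δ t` (`Lambda1_segmentation`) turns `Λ` into `∫ ν (jumpSet u δ x) dx`, where
`ν = dt / t²` is the measure `invSq`.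

Fix `x`, let `m = u' x` and let `f` be the fractional part of `u x / δ`. The level of `x + δ t`
differs by at least `2` from that of `x` exactly when the difference quotient
`(u (x + δ t) - u x) / δ`, which is close to `m t`, is at least `2 - f` or less than `-(1 + f)`. As
`ν [a, ∞) = 1 / a`, the inner mass is asymptotic to `|m| (1 / (2 - f) + 1 / (1 + f))`, that is to
`|u' x| * profile (u x / δ)` (`tendsto_invSq_jumpSet`, by way of `invSq_two_sided`). This mass does
not converge as `δ → 0`, but its difference from the asymptotic expression tends to `0` pointwise.
It is dominated by `C / (1 + x²)`: by the Lipschitz bound near the support of `u`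
(`invSq_jumpSet_le`) and by the distance to the support elsewhere (`invSq_jumpSet_le_tail`).

It remains to average the oscillating profile. Its mean over a period is `2 log 2`
(`integral_profile`), and `averaging` shows that a mean-zero periodic function of `u / δ`
integrates to `0` against `|u'|` in the limit.
-/

open MeasureTheory Filter Set Topology ENNReal

/-! ### The measure `dt / t²` -/

/-- The measure `dt / t²` on the line (density `0` at the origin). -/
noncomputable def invSq : Measure ℝ :=
  volume.withDensity fun t => ENNReal.ofReal ((t ^ 2)⁻¹)

instance : SFinite invSq := by unfold invSq; infer_instance

lemma invSq_Ioi {a : ℝ} (ha : 0 < a) : invSq (Ioi a) = ENNReal.ofReal (1 / a) := by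
  rw [invSq, withDensity_apply _ measurableSet_Ioi]
  have hrp : ∀ t ∈ Ioi a, (t ^ 2)⁻¹ = t ^ (-2 : ℝ) := by
    intro t ht
    rw [Real.rpow_neg (ha.trans ht).le]
    norm_cast
  rw [setLIntegral_congr_fun measurableSet_Ioi
    (fun t ht => by rw [hrp t ht] :
      EqOn _ (fun t : ℝ => ENNReal.ofReal (t ^ (-2 : ℝ))) (Ioi a)),
    ← ofReal_integral_eq_lintegral_ofReal
      (integrableOn_Ioi_rpow_of_lt (by norm_num) ha), integral_Ioi_rpow_of_lt (by norm_num) ha]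
  · congr 1
    norm_num
    rw [Real.rpow_neg_one]
  · filter_upwards [ae_restrict_mem measurableSet_Ioi] with t ht
    exact Real.rpow_nonneg (ha.trans ht).le _

lemma invSq_Ici {a : ℝ} (ha : 0 < a) : invSq (Ici a) = ENNReal.ofReal (1 / a) := by
  rw [← invSq_Ioi ha]
  exact measure_congr ((withDensity_absolutelyContinuous _ _).ae_eq Ioi_ae_eq_Ici.symm)

lemma invSq_neg {E : Set ℝ} (hE : MeasurableSet E) : invSq (Neg.neg ⁻¹' E) = invSq E := by
  rw [invSq, withDensity_apply _ hE, withDensity_apply _ (measurable_neg hE),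
    ← (Measure.measurePreserving_neg (volume : Measure ℝ)).setLIntegral_comp_preimage hE
      (by fun_prop)]
  simp

lemma invSq_real_neg {E : Set ℝ} (hE : MeasurableSet E) :
    invSq.real (Neg.neg ⁻¹' E) = invSq.real E := by
  rw [measureReal_def, measureReal_def, invSq_neg hE]

/-- The `dt / t²`-measure of the superlevel set at height `a` of a function
that is `ε`-close to the line of slope `m` on `(0, T)`; an exact line would give `m⁺ / a`. The
portion beyond `T` has mass at most `1 / T`. -/
lemma invSq_one_sided {E : Set ℝ} {q : ℝ → ℝ} {a m ε T : ℝ} (ha : 1 ≤ a) (hε : 0 ≤ ε)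
    (hT : 0 < T) (hq : ∀ t, 0 < t → t < T → |q t - m * t| ≤ ε * t) (hE : E ⊆ Ioi 0)
    (h1 : ∀ t ∈ E, t < T → a ≤ q t) (h2 : ∀ t, 0 < t → t < T → a < q t → t ∈ E) :
    invSq E ≠ ∞ ∧ |invSq.real E - max m 0 / a| ≤ ε + 1 / T := by
  have ha0 : 0 < a := by linarith
  have hT' : 0 < 1 / T := by positivity
  have hεa : ε / a ≤ ε := div_le_self hε ha
  have up : invSq E ≤ ENNReal.ofReal (max m 0 / a + ε + 1 / T) := by
    rcases le_or_gt (m + ε) 0 with hm | hm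
    · calc invSq E ≤ invSq (Ici T) := by
            refine measure_mono fun t ht => ?_
            by_contra hlt
            have hlt : t < T := not_le.1 hlt
            have ht0 : 0 < t := hE ht
            have := (abs_le.1 (hq t ht0 hlt)).2
            nlinarith [h1 t ht hlt]
        _ = ENNReal.ofReal (1 / T) := invSq_Ici hT
        _ ≤ _ := by
            apply ENNReal.ofReal_le_ofReal
            have : 0 ≤ max m 0 / a := by positivity
            linarith
    · calc invSq E ≤ invSq (Ici (a / (m + ε)) ∪ Ici T) := by
            refine measure_mono fun t ht => ?_
            by_cases hlt : t < T
            · left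
              have ht0 : 0 < t := hE ht
              have := (abs_le.1 (hq t ht0 hlt)).2
              rw [mem_Ici, div_le_iff₀ hm]
              nlinarith [h1 t ht hlt]
            · exact Or.inr (not_lt.1 hlt)
        _ ≤ _ := measure_union_le _ _
        _ = ENNReal.ofReal ((m + ε) / a) + ENNReal.ofReal (1 / T) := by
            rw [invSq_Ici (by positivity), invSq_Ici hT, one_div_div]
        _ = ENNReal.ofReal ((m + ε) / a + 1 / T) :=
            (ENNReal.ofReal_add (by positivity) hT'.le).symm
        _ ≤ _ := by
            apply ENNReal.ofReal_le_ofReal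
            have : m / a ≤ max m 0 / a := by gcongr; exact le_max_left _ _
            rw [add_div]
            linarith
  have fin : invSq E ≠ ∞ := ne_top_of_le_ne_top ENNReal.ofReal_ne_top up
  have hnn : 0 ≤ max m 0 / a := by positivity
  refine ⟨fin, abs_le.2 ⟨?_, ?_⟩⟩
  · rcases le_or_gt m ε with hm | hm
    · have : max m 0 / a ≤ ε / a := by gcongr; exact max_le hm hε
      have := measureReal_nonneg (μ := invSq) (s := E)
      linarith
    · have hm' : 0 < m - ε := by linarith
      have hsub : Ioi (a / (m - ε)) ⊆ E ∪ Ici T := by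
        intro t ht
        have ht0 : 0 < t := lt_trans (by positivity) ht
        by_cases hlt : t < T
        · left
          refine h2 t ht0 hlt ?_
          have := (abs_le.1 (hq t ht0 hlt)).1
          rw [mem_Ioi, div_lt_iff₀ hm'] at ht
          nlinarith
        · exact Or.inr (not_lt.1 hlt)
      have hle := (measure_mono hsub).trans (measure_union_le (μ := invSq) _ _)
      rw [invSq_Ioi (by positivity), invSq_Ici hT, one_div_div, ← ENNReal.ofReal_toReal fin,
        ← ENNReal.ofReal_add ENNReal.toReal_nonneg hT'.le,
        ENNReal.ofReal_le_ofReal_iff (by positivity)] at hle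
      rw [max_eq_left (by linarith), measureReal_def]
      rw [sub_div] at hle
      linarith
  · have := ENNReal.toReal_le_of_le_ofReal (by positivity) up
    rw [measureReal_def]
    linarith

/-- The two-sided version: `q` leaves the window `[-b, a)` on both sides of the origin, and each of
the four resulting pieces is governed by `invSq_one_sided`. -/
lemma invSq_two_sided {q : ℝ → ℝ} (hqm : Measurable q) {a b m ε T : ℝ} (ha : 1 ≤ a) (hb : 1 ≤ b)
    (hε : 0 ≤ ε) (hT : 0 < T) (hq : ∀ t, |t| < T → |q t - m * t| ≤ ε * |t|) :
    |invSq.real {t | a ≤ q t ∨ q t < -b} - |m| * (1 / a + 1 / b)| ≤ 4 * (ε + 1 / T) := by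
  have hq0 : q 0 = 0 := by simpa using hq 0 (by simpa using hT)
  have hpos : ∀ t, 0 < t → t < T → |q t - m * t| ≤ ε * t := fun t h0 h => by
    simpa [abs_of_pos h0] using hq t (by rwa [abs_of_pos h0])
  have hneg : ∀ t, 0 < t → t < T → |q (-t) - -m * t| ≤ ε * t := fun t h0 h => by
    simpa [abs_of_pos h0] using hq (-t) (by rwa [abs_neg, abs_of_pos h0])
  have hqn : Measurable fun t => q (-t) := hqm.comp measurable_neg
  obtain ⟨f1, e1⟩ := invSq_one_sided (E := {t | 0 < t ∧ a ≤ q t}) ha hε hT hpos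
    (fun t ht => ht.1) (fun t ht _ => ht.2) (fun t h0 _ h => ⟨h0, h.le⟩)
  obtain ⟨f2, e2⟩ := invSq_one_sided (E := {t | 0 < t ∧ q t < -b}) (q := fun t => -q t) (m := -m)
    hb hε hT (fun t h0 h => by
      rw [← abs_neg]; convert hpos t h0 h using 2; ring)
    (fun t ht => ht.1) (fun t ht _ => by linarith [ht.2])
    (fun t h0 _ h => ⟨h0, by linarith⟩)
  obtain ⟨f3, e3⟩ := invSq_one_sided (E := {t | 0 < t ∧ a ≤ q (-t)}) ha hε hT hneg
    (fun t ht => ht.1) (fun t ht _ => ht.2) (fun t h0 _ h => ⟨h0, h.le⟩)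
  obtain ⟨f4, e4⟩ := invSq_one_sided (E := {t | 0 < t ∧ q (-t) < -b}) (q := fun t => -q (-t))
    (m := m) hb hε hT (fun t h0 h => by
      rw [← abs_neg]; convert hneg t h0 h using 2; ring)
    (fun t ht => ht.1) (fun t ht _ => by linarith [ht.2])
    (fun t h0 _ h => ⟨h0, by linarith⟩)
  set E1 := {t | 0 < t ∧ a ≤ q t}
  set E2 := {t | 0 < t ∧ q t < -b}
  set E3 := {t | 0 < t ∧ a ≤ q (-t)}
  set E4 := {t | 0 < t ∧ q (-t) < -b}
  have hp : MeasurableSet {t : ℝ | 0 < t} := measurableSet_Ioi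
  have m2 : MeasurableSet E2 := hp.inter (measurableSet_lt hqm measurable_const)
  have m3 : MeasurableSet E3 := hp.inter (measurableSet_le measurable_const hqn)
  have m4 : MeasurableSet E4 := hp.inter (measurableSet_lt hqn measurable_const)
  have hU : {t | a ≤ q t ∨ q t < -b} = (E1 ∪ E2) ∪ (Neg.neg ⁻¹' E3 ∪ Neg.neg ⁻¹' E4) := by
    ext t
    simp only [mem_ofPred_eq, mem_union, mem_preimage, E1, E2, E3, E4, neg_neg, Left.neg_pos_iff]
    rcases lt_trichotomy t 0 with h | h | h
    · simp [h, not_lt.2 h.le]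
    · subst h
      simp [hq0]
      constructor <;> linarith
    · simp [h, not_lt.2 h.le]
  have d12 : Disjoint E1 E2 := Set.disjoint_left.2 fun t h h' => by linarith [h.2, h'.2]
  have d34 : Disjoint (Neg.neg ⁻¹' E3) (Neg.neg ⁻¹' E4) :=
    Set.disjoint_left.2 fun t h h' => by linarith [h.2, h'.2]
  have d : Disjoint (E1 ∪ E2) (Neg.neg ⁻¹' E3 ∪ Neg.neg ⁻¹' E4) := by
    refine Set.disjoint_left.2 fun t h h' => ?_
    have p : 0 < t := h.elim (·.1) (·.1)
    have n : 0 < -t := h'.elim (·.1) (·.1)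
    linarith
  have f3' : invSq (Neg.neg ⁻¹' E3) ≠ ∞ := by rwa [invSq_neg m3]
  have f4' : invSq (Neg.neg ⁻¹' E4) ≠ ∞ := by rwa [invSq_neg m4]
  rw [hU, measureReal_union d ((measurable_neg m3).union (measurable_neg m4))
      (measure_union_ne_top f1 f2) (measure_union_ne_top f3' f4'),
    measureReal_union d12 m2 f1 f2, measureReal_union d34 (measurable_neg m4) f3' f4',
    invSq_real_neg m3, invSq_real_neg m4]
  have hm : |m| * (1 / a + 1 / b) = max m 0 / a + max (-m) 0 / b + max (-m) 0 / a + max m 0 / b := by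
    rw [← max_zero_add_max_neg_zero_eq_abs_self]
    ring
  rw [hm]
  rw [abs_le] at *
  constructor <;> linarith [e1.1, e1.2, e2.1, e2.2, e3.1, e3.2, e4.1, e4.2]

/-! ### The oscillating profile and its average -/

/-- The limiting microscopic profile: where `u` has slope `m ≠ 0`, the inner integral of `Λ` is
asymptotic to `|m|` times this function of `u x / δ`. -/
noncomputable def profile (s : ℝ) : ℝ := 1 / (2 - Int.fract s) + 1 / (1 + Int.fract s)

/-- Continuity across the integers holds because `1 / (2 - f) + 1 / (1 + f)` takes the same value
at `f = 0` and `f = 1`. -/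
lemma profile_continuous : Continuous profile := by
  have h : ContinuousOn (fun f : ℝ => 1 / (2 - f) + 1 / (1 + f)) (Icc 0 1) := by
    refine ContinuousOn.add (continuousOn_const.div (by fun_prop) ?_)
      (continuousOn_const.div (by fun_prop) ?_) <;>
    · intro x hx
      have := hx.1
      have := hx.2
      first
        | exact (by linarith : (0 : ℝ) < 2 - x).ne'
        | exact (by linarith : (0 : ℝ) < 1 + x).ne'
  exact h.comp_fract'' (by norm_num)

lemma profile_bound (s : ℝ) : 0 ≤ profile s ∧ profile s ≤ 2 := by
  have h0 := Int.fract_nonneg s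
  have h1 := Int.fract_lt_one s
  have a1 : 1 / (2 - Int.fract s) ≤ 1 := by rw [div_le_one] <;> linarith
  have a2 : 1 / (1 + Int.fract s) ≤ 1 := by rw [div_le_one] <;> linarith
  have b1 : 0 ≤ 1 / (2 - Int.fract s) := by apply div_nonneg <;> linarith
  have b2 : 0 ≤ 1 / (1 + Int.fract s) := by positivity
  unfold profile
  constructor <;> linarith

lemma profile_periodic : Function.Periodic profile 1 := fun s => by
  simp [profile]

lemma integral_profile : ∫ s in (0 : ℝ)..1, profile s = 2 * Real.log 2 := by
  have hder : ∀ s ∈ uIcc (0 : ℝ) 1,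
      HasDerivAt (fun s => Real.log (1 + s) - Real.log (2 - s)) (profile s) s := by
    intro s hs
    rw [uIcc_of_le zero_le_one] at hs
    have h1 : (0 : ℝ) < 1 + s := by linarith [hs.1]
    have h2 : (0 : ℝ) < 2 - s := by linarith [hs.2]
    have e : profile s = 1 / (1 + s) - (-1) / (2 - s) := by
      rcases eq_or_lt_of_le hs.2 with h | h
      · subst h
        norm_num [profile]
      · rw [profile, Int.fract_eq_self.2 ⟨hs.1, h⟩]
        ring
    rw [e]
    exact (((hasDerivAt_id s).const_add 1).log h1.ne').sub
      (((hasDerivAt_id s).const_sub 2).log h2.ne')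
  rw [intervalIntegral.integral_eq_sub_of_hasDerivAt hder
    (profile_continuous.intervalIntegrable _ _)]
  norm_num
  ring

/-- A mean-zero periodic function `Q` of the fast variable `u / δ` averages out against `|u'|`.
With `G` the (bounded, periodic) primitive of `Q`, the product `u' · Q (u / δ)` is the derivative
of the uniformly small function `δ · G (u / δ)`. The sign of `u'` is replaced by a
polynomial close to the continuous function `u' / (|u'| + ε)`, so that one can integrate by
parts. -/
lemma averaging {u : ℝ → ℝ} (hu : ContDiff ℝ 1 u) {Q : ℝ → ℝ} (hQ : Continuous Q)
    (hper : Function.Periodic Q 1) (hmean : ∫ s in (0 : ℝ)..1, Q s = 0) {R : ℝ} (hR : 0 ≤ R) :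
    Tendsto (fun δ : ℝ => ∫ x in (-R)..R, |deriv u x| * Q (u x / δ)) (𝓝[>] 0) (𝓝 0) := by
  have hdu : Continuous (deriv u) := hu.continuous_deriv le_rfl
  have hcu : Continuous u := hu.continuous
  have hder : ∀ x, HasDerivAt u (deriv u x) x := fun x =>
    (hu.differentiable one_ne_zero x).hasDerivAt
  have hRR : -R ≤ R := by linarith
  set G : ℝ → ℝ := fun s => ∫ r in (0 : ℝ)..s, Q r with hG
  have hGd : ∀ s, HasDerivAt G (Q s) s := fun s =>
    intervalIntegral.integral_hasDerivAt_right (hQ.intervalIntegrable _ _)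
      (hQ.stronglyMeasurableAtFilter _ _) hQ.continuousAt
  have hGc : Continuous G := continuous_iff_continuousAt.2 fun s => (hGd s).continuousAt
  have hGp : Function.Periodic G 1 := fun s => by
    have h1 := intervalIntegral.integral_add_adjacent_intervals (μ := volume)
      (hQ.intervalIntegrable 0 s) (hQ.intervalIntegrable s (s + 1))
    have h2 := hper.intervalIntegral_add_eq s 0
    simp only [zero_add] at h2
    rw [h2, hmean] at h1
    simp only [hG]
    linarith
  obtain ⟨K, hK⟩ := (hper.isBounded_of_continuous one_ne_zero hQ).exists_norm_le
  obtain ⟨M, hM⟩ := (hGp.isBounded_of_continuous one_ne_zero hGc).exists_norm_le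
  have hK : ∀ s, |Q s| ≤ K := fun s => hK _ (mem_range_self s)
  have hM : ∀ s, |G s| ≤ M := fun s => hM _ (mem_range_self s)
  have hK0 : 0 ≤ K := (abs_nonneg _).trans (hK 0)
  have hM0 : 0 ≤ M := (abs_nonneg _).trans (hM 0)
  obtain ⟨L, hL⟩ := isCompact_Icc.exists_bound_of_continuousOn (s := Icc (-R) R) hdu.continuousOn
  have hL : ∀ x ∈ Icc (-R) R, |deriv u x| ≤ L := hL
  have hL0 : 0 ≤ L := (abs_nonneg _).trans (hL R ⟨hRR, le_rfl⟩)
  rw [Metric.tendsto_nhds]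
  intro η hη
  set ε := η / (2 * ((1 + L) * K * (2 * R) + 1)) with hε
  have hε0 : 0 < ε := by positivity
  have hden : ∀ x, 0 < |deriv u x| + ε := fun x => by positivity
  obtain ⟨p, hp⟩ := exists_polynomial_near_of_continuousOn (-R) R
    (fun x => deriv u x / (|deriv u x| + ε))
    ((hdu.div (by fun_prop) fun x => (hden x).ne').continuousOn) ε hε0
  obtain ⟨B, hB⟩ := isCompact_Icc.exists_bound_of_continuousOn (s := Icc (-R) R)
    p.continuous.continuousOn
  obtain ⟨B', hB'⟩ := isCompact_Icc.exists_bound_of_continuousOn (s := Icc (-R) R)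
    p.derivative.continuous.continuousOn
  have hB0 : 0 ≤ B := (norm_nonneg _).trans (hB R ⟨hRR, le_rfl⟩)
  have hB0' : 0 ≤ B' := (norm_nonneg _).trans (hB' R ⟨hRR, le_rfl⟩)
  set C := 2 * B * M + B' * M * (2 * R) with hC
  have hC0 : 0 ≤ C := by positivity
  have happ : ∀ x ∈ Icc (-R) R, |(|deriv u x| - p.eval x * deriv u x)| ≤ (1 + L) * ε := by
    intro x hx
    have h1 : |(|deriv u x| - deriv u x / (|deriv u x| + ε) * deriv u x)| ≤ ε := by
      have : |deriv u x| - deriv u x / (|deriv u x| + ε) * deriv u x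
          = ε * (|deriv u x| / (|deriv u x| + ε)) := by
        have := (hden x).ne'
        field_simp
        rw [← sq_abs (deriv u x)]
        ring
      rw [this, abs_of_nonneg (by have := hden x; positivity)]
      refine mul_le_of_le_one_right hε0.le ?_
      rw [div_le_one (hden x)]
      linarith
    have h2 : |(p.eval x - deriv u x / (|deriv u x| + ε)) * deriv u x| ≤ ε * L := by
      rw [abs_mul]
      exact mul_le_mul (hp x hx).le (hL x hx) (abs_nonneg _) hε0.le
    calc _ = |(|deriv u x| - deriv u x / (|deriv u x| + ε) * deriv u x)
            - (p.eval x - deriv u x / (|deriv u x| + ε)) * deriv u x| := by congr 1; ring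
      _ ≤ _ := abs_sub _ _
      _ ≤ _ := by linarith
  have key : ∀ δ > 0, |∫ x in (-R)..R, |deriv u x| * Q (u x / δ)|
      ≤ (1 + L) * ε * K * (2 * R) + δ * C := by
    intro δ hδ
    have hQc : Continuous fun x => Q (u x / δ) := hQ.comp (hcu.div_const δ)
    have hGc' : Continuous fun x => G (u x / δ) := hGc.comp (hcu.div_const δ)
    have hsplit : ∫ x in (-R)..R, |deriv u x| * Q (u x / δ)
        = (∫ x in (-R)..R, (|deriv u x| - p.eval x * deriv u x) * Q (u x / δ))
          + ∫ x in (-R)..R, p.eval x * (deriv u x * Q (u x / δ)) := by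
      rw [← intervalIntegral.integral_add]
      · congr 1 with x
        ring
      · exact (((hdu.abs).sub (p.continuous.mul hdu)).mul hQc).intervalIntegrable _ _
      · exact (p.continuous.mul (hdu.mul hQc)).intervalIntegrable _ _
    have hhd : ∀ x, HasDerivAt (fun x => δ * G (u x / δ)) (deriv u x * Q (u x / δ)) x := by
      intro x
      refine (((hGd (u x / δ)).comp x ((hder x).div_const δ)).const_mul δ).congr_deriv ?_
      have := hδ.ne'
      field_simp
    have hibp := intervalIntegral.integral_mul_deriv_eq_deriv_mul (a := -R) (b := R)
      (u := fun x => p.eval x) (u' := fun x => p.derivative.eval x)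
      (v := fun x => δ * G (u x / δ)) (v' := fun x => deriv u x * Q (u x / δ))
      (fun x _ => p.hasDerivAt x) (fun x _ => hhd x)
      (p.derivative.continuous.intervalIntegrable _ _)
      ((hdu.mul hQc).intervalIntegrable _ _)
    have i1 : |∫ x in (-R)..R, (|deriv u x| - p.eval x * deriv u x) * Q (u x / δ)|
        ≤ (1 + L) * ε * K * |R - -R| := by
      rw [← Real.norm_eq_abs]
      refine intervalIntegral.norm_integral_le_of_norm_le_const fun x hx => ?_
      rw [uIoc_of_le hRR] at hx
      rw [Real.norm_eq_abs, abs_mul]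
      exact mul_le_mul (happ x ⟨hx.1.le, hx.2⟩) (hK _) (abs_nonneg _) (by positivity)
    have i2 : |∫ x in (-R)..R, p.derivative.eval x * (δ * G (u x / δ))|
        ≤ B' * (δ * M) * |R - -R| := by
      rw [← Real.norm_eq_abs]
      refine intervalIntegral.norm_integral_le_of_norm_le_const fun x hx => ?_
      rw [uIoc_of_le hRR] at hx
      rw [Real.norm_eq_abs, abs_mul, abs_mul, abs_of_pos hδ]
      exact mul_le_mul (hB' x ⟨hx.1.le, hx.2⟩) (by gcongr; exact hM _) (by positivity) hB0'
    have hend : ∀ x ∈ Icc (-R) R, |p.eval x * (δ * G (u x / δ))| ≤ B * (δ * M) := by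
      intro x hx
      rw [abs_mul, abs_mul, abs_of_pos hδ]
      exact mul_le_mul (hB x hx) (by gcongr; exact hM _) (by positivity) hB0
    have e1 := hend R ⟨hRR, le_rfl⟩
    have e2 := hend (-R) ⟨le_rfl, hRR⟩
    have hRabs : |R - -R| = 2 * R := by rw [abs_of_nonneg (by linarith)]; ring
    rw [hRabs] at i1 i2
    rw [hsplit, hibp, hC]
    rw [abs_le] at *
    constructor <;> nlinarith [i1.1, i1.2, i2.1, i2.2, e1.1, e1.2, e2.1, e2.2]
  have hsmall : (1 + L) * ε * K * (2 * R) < η / 2 := by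
    have hD : 0 < (1 + L) * K * (2 * R) + 1 := by positivity
    have : η / 2 = ε * ((1 + L) * K * (2 * R) + 1) := by
      rw [hε]
      field_simp
    rw [this]
    nlinarith
  have hlim : Tendsto (fun δ : ℝ => δ * C) (𝓝[>] 0) (𝓝 0) := by
    have : Tendsto (fun δ : ℝ => δ * C) (𝓝 0) (𝓝 (0 * C)) := (continuous_mul_const C).tendsto 0
    rw [zero_mul] at this
    exact this.mono_left nhdsWithin_le_nhds
  filter_upwards [self_mem_nhdsWithin, hlim.eventually_lt_const (half_pos hη)] with δ hδ hδ'
  rw [Real.dist_eq, sub_zero]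
  linarith [key δ hδ]

/-! ### Jumps of the segmentation -/

/-- The rescaled increments `t` such that `x` and `x + δ t` lie at least two steps of the
`δ`-segmentation of `u` apart. -/
def jumpSet (u : ℝ → ℝ) (δ x : ℝ) : Set ℝ := {t | 2 ≤ |⌊u (x + δ * t) / δ⌋ - ⌊u x / δ⌋|}

lemma measurableSet_jumpSet_prod {u : ℝ → ℝ} (hu : Continuous u) (δ : ℝ) :
    MeasurableSet {p : ℝ × ℝ | p.2 ∈ jumpSet u δ p.1} := by
  have h1 : Measurable fun p : ℝ × ℝ => ⌊u (p.1 + δ * p.2) / δ⌋ :=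
    Int.measurable_floor.comp (by fun_prop)
  have h2 : Measurable fun p : ℝ × ℝ => ⌊u p.1 / δ⌋ := Int.measurable_floor.comp (by fun_prop)
  exact (h1.sub h2) (MeasurableSet.of_discrete (s := {n : ℤ | 2 ≤ |n|}))

lemma measurableSet_jumpSet {u : ℝ → ℝ} (hu : Continuous u) (δ x : ℝ) :
    MeasurableSet (jumpSet u δ x) :=
  measurable_prodMk_left (x := x) (measurableSet_jumpSet_prod hu δ)

lemma measurable_invSq_jumpSet {u : ℝ → ℝ} (hu : Continuous u) (δ : ℝ) :
    Measurable fun x => invSq (jumpSet u δ x) :=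
  measurable_measure_prodMk_left (measurableSet_jumpSet_prod hu δ)

lemma mem_jumpSet {u : ℝ → ℝ} {δ x t : ℝ} :
    t ∈ jumpSet u δ x ↔ 2 - Int.fract (u x / δ) ≤ (u (x + δ * t) - u x) / δ ∨
      (u (x + δ * t) - u x) / δ < -(1 + Int.fract (u x / δ)) := by
  have e : u x / δ = ⌊u x / δ⌋ + Int.fract (u x / δ) := (Int.floor_add_fract _).symm
  have h1 : 2 ≤ ⌊u (x + δ * t) / δ⌋ - ⌊u x / δ⌋ ↔
      2 - Int.fract (u x / δ) ≤ (u (x + δ * t) - u x) / δ := by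
    rw [le_sub_iff_add_le, Int.le_floor, sub_div]
    push_cast
    constructor <;> intro h <;> linarith
  have h2 : ⌊u (x + δ * t) / δ⌋ - ⌊u x / δ⌋ ≤ -2 ↔
      (u (x + δ * t) - u x) / δ < -(1 + Int.fract (u x / δ)) := by
    have : ⌊u (x + δ * t) / δ⌋ - ⌊u x / δ⌋ ≤ -2 ↔ ⌊u (x + δ * t) / δ⌋ < ⌊u x / δ⌋ - 1 := by omega
    rw [this, Int.floor_lt, sub_div]
    push_cast
    constructor <;> intro h <;> linarith
  rw [← h1, ← h2, jumpSet, mem_ofPred_eq, le_abs]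
  refine or_congr Iff.rfl ?_
  omega

/-- The substitution `y = x + δ t` in the inner integral turns `Λ` into an integral
of `invSq`-masses. -/
lemma Lambda1_segmentation {u : ℝ → ℝ} (hu : Continuous u) {δ : ℝ} (hδ : 0 < δ) :
    Lambda1 (phik 1) 1 δ (fun x => δ * (⌊u x / δ⌋ : ℝ)) Set.univ
      = ∫⁻ x, invSq (jumpSet u δ x) := by
  rw [Lambda1, Measure.restrict_univ]
  refine lintegral_congr fun x => ?_
  set F : ℝ → ℝ≥0∞ := fun y => ENNReal.ofReal
    (phik 1 (|δ * (⌊u y / δ⌋ : ℝ) - δ * (⌊u x / δ⌋ : ℝ)| / δ) * δ ^ (1 : ℝ)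
      / |y - x| ^ (1 + 1 : ℝ)) with hF
  have hscale : ∫⁻ y, F (x + y) = ENNReal.ofReal δ * ∫⁻ t, F (x + δ * t) := by
    have h := Real.smul_map_volume_mul_left hδ.ne'
    rw [abs_of_pos hδ] at h
    conv_lhs => rw [← h]
    rw [lintegral_smul_measure]
    congr 1
    exact lintegral_map_equiv (fun y => F (x + y)) (MeasurableEquiv.mulLeft₀ δ hδ.ne')
  have hm := measurableSet_jumpSet hu δ x
  rw [← lintegral_add_left_eq_self F x, hscale, ← lintegral_const_mul' _ _ ENNReal.ofReal_ne_top,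
    invSq, withDensity_apply _ hm, ← lintegral_indicator hm]
  refine lintegral_congr fun t => ?_
  have habs : |δ * (⌊u (x + δ * t) / δ⌋ : ℝ) - δ * (⌊u x / δ⌋ : ℝ)| / δ
      = ((|⌊u (x + δ * t) / δ⌋ - ⌊u x / δ⌋| : ℤ) : ℝ) := by
    rw [← mul_sub, abs_mul, abs_of_pos hδ, mul_div_cancel_left₀ _ hδ.ne']
    push_cast
    rfl
  have hpow : |x + δ * t - x| ^ (1 + 1 : ℝ) = δ ^ 2 * t ^ 2 := by
    rw [show (1 + 1 : ℝ) = ((2 : ℕ) : ℝ) by norm_num, Real.rpow_natCast, sq_abs]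
    ring
  simp only [hF]
  rw [habs, hpow, Real.rpow_one, ← ENNReal.ofReal_mul hδ.le]
  by_cases ht : t ∈ jumpSet u δ x
  · rw [indicator_of_mem ht]
    have hgt : ¬ ((|⌊u (x + δ * t) / δ⌋ - ⌊u x / δ⌋| : ℤ) : ℝ) ≤ 1 := by
      have : 2 ≤ |⌊u (x + δ * t) / δ⌋ - ⌊u x / δ⌋| := ht
      norm_cast
      omega
    rw [phik, if_neg hgt]
    congr 1
    rw [one_mul, ← mul_div_assoc, ← sq, div_mul_cancel_left₀ (by positivity)]
  · rw [indicator_of_notMem ht]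
    have hle : ((|⌊u (x + δ * t) / δ⌋ - ⌊u x / δ⌋| : ℤ) : ℝ) ≤ 1 := by
      have : ¬ 2 ≤ |⌊u (x + δ * t) / δ⌋ - ⌊u x / δ⌋| := ht
      norm_cast
      omega
    rw [phik, if_pos hle]
    simp

lemma invSq_jumpSet_le {u : ℝ → ℝ} {L : ℝ} (hL : 0 < L) (hlip : ∀ x y, |u y - u x| ≤ L * |y - x|)
    {δ : ℝ} (hδ : 0 < δ) (x : ℝ) : invSq (jumpSet u δ x) ≤ ENNReal.ofReal (2 * L) := by
  have hsub : jumpSet u δ x ⊆ Ici (1 / L) ∪ Neg.neg ⁻¹' Ici (1 / L) := by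
    intro t ht
    have hq : |(u (x + δ * t) - u x) / δ| ≤ L * |t| := by
      rw [abs_div, abs_of_pos hδ, div_le_iff₀ hδ]
      refine (hlip _ _).trans_eq ?_
      rw [add_sub_cancel_left, abs_mul, abs_of_pos hδ]
      ring
    have h1 : 1 ≤ |(u (x + δ * t) - u x) / δ| := by
      have f0 := Int.fract_nonneg (u x / δ)
      have f1 := Int.fract_lt_one (u x / δ)
      rw [le_abs]
      rcases mem_jumpSet.1 ht with h | h
      · left; linarith
      · right; linarith
    have : 1 / L ≤ |t| := by
      rw [div_le_iff₀ hL]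
      linarith
    exact le_abs.1 this
  refine (measure_mono hsub).trans ((measure_union_le _ _).trans_eq ?_)
  rw [invSq_neg measurableSet_Ici, invSq_Ici (by positivity), one_div_one_div,
    ← ENNReal.ofReal_add hL.le hL.le, two_mul]

/-- Far from the support of `u` the admissible `t` form an interval of length `2R / δ` at distance
at least `|x| / (2δ)` from the origin. -/
lemma invSq_jumpSet_le_tail {u : ℝ → ℝ} {R : ℝ} (hR : 0 < R) (hsupp : ∀ y, R < |y| → u y = 0)
    {δ : ℝ} (hδ : 0 < δ) {x : ℝ} (hx : 2 * R < |x|) :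
    invSq (jumpSet u δ x) ≤ ENNReal.ofReal (8 * R * δ / x ^ 2) := by
  have hux : u x = 0 := hsupp x (by linarith)
  have hsub : jumpSet u δ x ⊆ Icc ((-R - x) / δ) ((R - x) / δ) := by
    intro t ht
    have : |x + δ * t| ≤ R := by
      by_contra h
      have h' := hsupp _ (not_le.1 h)
      have : 2 ≤ |⌊u (x + δ * t) / δ⌋ - ⌊u x / δ⌋| := ht
      rw [h', hux] at this
      simp at this
    rw [abs_le] at this
    rw [mem_Icc, div_le_iff₀ hδ, le_div_iff₀ hδ]
    constructor <;> linarith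
  have hx0 : 0 < |x| := by linarith
  have hx2 : 0 < x ^ 2 := by rw [← sq_abs]; positivity
  refine (measure_mono hsub).trans ?_
  rw [invSq, withDensity_apply _ measurableSet_Icc]
  calc ∫⁻ t in Icc ((-R - x) / δ) ((R - x) / δ), ENNReal.ofReal ((t ^ 2)⁻¹)
      ≤ ∫⁻ t in Icc ((-R - x) / δ) ((R - x) / δ), ENNReal.ofReal (4 * δ ^ 2 / x ^ 2) := by
        refine setLIntegral_mono measurable_const fun t ht => ENNReal.ofReal_le_ofReal ?_
        rw [mem_Icc, div_le_iff₀ hδ, le_div_iff₀ hδ] at ht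
        have h1 : |x| / 2 ≤ |t * δ| := by
          rcases le_total 0 x with h | h
          · rw [abs_of_nonneg h] at *
            exact (by linarith : x / 2 ≤ -(t * δ)).trans (neg_le_abs _)
          · rw [abs_of_nonpos h] at *
            exact (by linarith : -x / 2 ≤ t * δ).trans (le_abs_self _)
        have h2 : x ^ 2 / 4 ≤ t ^ 2 * δ ^ 2 := by
          have := pow_le_pow_left₀ (by positivity) h1 2
          rw [div_pow, sq_abs, sq_abs, mul_pow] at this
          linarith
        have ht0 : 0 < t ^ 2 := by
          by_contra h
          have : t ^ 2 * δ ^ 2 ≤ 0 := mul_nonpos_of_nonpos_of_nonneg (not_lt.1 h) (by positivity)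
          linarith
        rw [inv_eq_one_div, div_le_div_iff₀ ht0 hx2]
        linarith
    _ = ENNReal.ofReal (8 * R * δ / x ^ 2) := by
        rw [setLIntegral_const, Real.volume_Icc, ← ENNReal.ofReal_mul (by positivity)]
        congr 1
        field_simp
        ring

/-- The pointwise asymptotics of the inner integral, from the first-order expansion of `u`
at `x`. -/
lemma tendsto_invSq_jumpSet {u : ℝ → ℝ} (hu : ContDiff ℝ 1 u) (x : ℝ) :
    Tendsto (fun δ : ℝ => invSq.real (jumpSet u δ x) - |deriv u x| * profile (u x / δ))
      (𝓝[>] 0) (𝓝 0) := by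
  rw [Metric.tendsto_nhds]
  intro η hη
  have hder : HasDerivAt u (deriv u x) x := (hu.differentiable one_ne_zero x).hasDerivAt
  have hε : 0 < η / 12 := by positivity
  obtain ⟨r, hr, hball⟩ := Metric.eventually_nhds_iff.1
    ((hasDerivAt_iff_isLittleO.1 hder).def hε)
  have hsmall : ∀ᶠ δ : ℝ in 𝓝[>] 0, δ < r * (η / 12) :=
    (eventually_lt_nhds (by positivity)).filter_mono nhdsWithin_le_nhds
  filter_upwards [self_mem_nhdsWithin, hsmall] with δ hδ hδr
  have hδ : 0 < δ := hδ
  have f0 := Int.fract_nonneg (u x / δ)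
  have f1 := Int.fract_lt_one (u x / δ)
  have hcu := hu.continuous
  have hset : jumpSet u δ x = {t | 2 - Int.fract (u x / δ) ≤ (u (x + δ * t) - u x) / δ ∨
      (u (x + δ * t) - u x) / δ < -(1 + Int.fract (u x / δ))} := by
    ext t
    exact mem_jumpSet
  have h := invSq_two_sided (q := fun t => (u (x + δ * t) - u x) / δ)
    (by fun_prop : Measurable _)
    (a := 2 - Int.fract (u x / δ)) (b := 1 + Int.fract (u x / δ)) (m := deriv u x)
    (by linarith) (by linarith) hε.le (T := r / δ) (by positivity) (by
      intro t ht
      rw [lt_div_iff₀ hδ] at ht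
      have hb := hball (y := x + δ * t) (by
        rw [Real.dist_eq, add_sub_cancel_left, abs_mul, abs_of_pos hδ]
        linarith)
      simp only [add_sub_cancel_left, Real.norm_eq_abs, smul_eq_mul] at hb
      rw [abs_mul, abs_of_pos hδ] at hb
      have e : (u (x + δ * t) - u x) / δ - deriv u x * t
          = (u (x + δ * t) - u x - δ * t * deriv u x) / δ := by
        field_simp
      rw [e, abs_div, abs_of_pos hδ, div_le_iff₀ hδ]
      linarith)
  rw [← hset] at h
  rw [Real.dist_eq, sub_zero, profile]
  refine h.trans_lt ?_
  have : 1 / (r / δ) < η / 12 := by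
    rw [one_div_div, div_lt_iff₀ hr]
    linarith
  linarith

/-- `S_δ u` stays within `δ` of `u` and vanishes where `u` does. -/
lemma tendsto_segmentation_L1 {u : ℝ → ℝ} {R : ℝ}
    (hsupp : ∀ y, R < |y| → u y = 0) :
    Tendsto (fun δ : ℝ => eLpNorm (fun x => δ * (⌊u x / δ⌋ : ℝ) - u x) 1 volume)
      (𝓝[>] 0) (𝓝 0) := by
  have hlim : Tendsto (fun δ : ℝ => ENNReal.ofReal (δ * (2 * R))) (𝓝[>] 0) (𝓝 0) := by
    have h : Tendsto (fun δ : ℝ => ENNReal.ofReal (δ * (2 * R))) (𝓝 0)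
        (𝓝 (ENNReal.ofReal (0 * (2 * R)))) :=
      (ENNReal.continuous_ofReal.comp (continuous_mul_const (2 * R))).tendsto 0
    rw [zero_mul, ENNReal.ofReal_zero] at h
    exact h.mono_left nhdsWithin_le_nhds
  refine tendsto_of_tendsto_of_tendsto_of_le_of_le' tendsto_const_nhds hlim
    (Eventually.of_forall fun _ => zero_le) ?_
  filter_upwards [self_mem_nhdsWithin] with δ hδ
  have hδ : 0 < δ := hδ
  rw [eLpNorm_one_eq_lintegral_enorm]
  calc ∫⁻ x, ‖δ * (⌊u x / δ⌋ : ℝ) - u x‖ₑ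
      ≤ ∫⁻ x, (Icc (-R) R).indicator (fun _ => ENNReal.ofReal δ) x := by
        refine lintegral_mono fun x => ?_
        by_cases hx : x ∈ Icc (-R) R
        · rw [indicator_of_mem hx, Real.enorm_eq_ofReal_abs]
          refine ENNReal.ofReal_le_ofReal ?_
          have e : δ * (⌊u x / δ⌋ : ℝ) - u x = -(δ * Int.fract (u x / δ)) := by
            rw [Int.fract]
            field_simp
            ring
          rw [e, abs_neg, abs_mul, abs_of_pos hδ, abs_of_nonneg (Int.fract_nonneg _)]
          exact mul_le_of_le_one_right hδ.le (Int.fract_lt_one _).le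
        · have : u x = 0 := hsupp x (by
            by_contra h
            exact hx (abs_le.1 (not_lt.1 h)))
          simp [this]
    _ = ENNReal.ofReal (δ * (2 * R)) := by
        rw [lintegral_indicator measurableSet_Icc, setLIntegral_const, Real.volume_Icc,
          ← ENNReal.ofReal_mul hδ.le]
        congr 2
        ring

/-! ### Passage to the limit -/

/-- the vertical `δ`-segmentations `S_δ u(x) = δ⌊u(x)/δ⌋` form a recovery
family for `u ∈ C¹_c(ℝ)` with `φ = φ_1`, `p = 1`. -/
theorem segmentation_recovery_p1 (u : ℝ → ℝ) (hu : ContDiff ℝ 1 u)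
    (hsupp : HasCompactSupport u) :
    Tendsto (fun δ : ℝ => eLpNorm (fun x => δ * (⌊u x / δ⌋ : ℝ) - u x) 1 volume)
      (𝓝[>] 0) (𝓝 0) ∧
    Tendsto (fun δ : ℝ => Lambda1 (phik 1) 1 δ (fun x => δ * (⌊u x / δ⌋ : ℝ)) Set.univ)
      (𝓝[>] 0) (𝓝 (ENNReal.ofReal (2 * Real.log 2 * ∫ x : ℝ, |deriv u x|))) := by
  have hcu := hu.continuous
  have hdu : Continuous (deriv u) := hu.continuous_deriv le_rfl
  obtain ⟨R₀, hR₀⟩ := hsupp.isCompact.isBounded.subset_closedBall 0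
  set R := max R₀ 1 with hRdef
  have hR1 : 1 ≤ R := le_max_right _ _
  have hR : 0 < R := by linarith
  have htsupp : ∀ y, R < |y| → y ∉ tsupport u := fun y hy hmem => by
    have := hR₀ hmem
    rw [mem_closedBall_zero_iff, Real.norm_eq_abs] at this
    linarith [le_max_left R₀ 1]
  have hu0 : ∀ y, R < |y| → u y = 0 := fun y hy => image_eq_zero_of_notMem_tsupport (htsupp y hy)
  have hdu0 : ∀ y, R < |y| → deriv u y = 0 := fun y hy => by
    by_contra h
    exact htsupp y hy (support_deriv_subset h)
  refine ⟨tendsto_segmentation_L1 hu0, ?_⟩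
  obtain ⟨L₀, hL₀⟩ := hdu.bounded_above_of_compact_support hsupp.deriv
  set L := max L₀ 1
  have hL : 0 < L := lt_of_lt_of_le one_pos (le_max_right _ _)
  have hdL : ∀ x, |deriv u x| ≤ L := fun x => (hL₀ x).trans (le_max_left _ _)
  have hlip : ∀ x y, |u y - u x| ≤ L * |y - x| := fun x y =>
    convex_univ.norm_image_sub_le_of_norm_deriv_le
      (fun x _ => hu.differentiable one_ne_zero x) (fun x _ => hdL x) (mem_univ _) (mem_univ _)
  -- A common integrable majorant, from the Lipschitz bound near the support and the tail bound
  -- away from it.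
  set C := 2 * L * (1 + 4 * R ^ 2) + 16 * R with hC
  have hfin : ∀ δ > 0, ∀ x, invSq (jumpSet u δ x) ≠ ∞ := fun δ hδ x =>
    ne_top_of_le_ne_top ENNReal.ofReal_ne_top (invSq_jumpSet_le hL hlip hδ x)
  have hmajG : ∀ δ > 0, δ ≤ 1 → ∀ x, invSq.real (jumpSet u δ x) ≤ C * (1 + x ^ 2)⁻¹ := by
    intro δ hδ hδ1 x
    rw [measureReal_def, ← div_eq_mul_inv, le_div_iff₀ (by positivity)]
    rcases le_or_gt |x| (2 * R) with hx | hx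
    · have h := ENNReal.toReal_le_of_le_ofReal (by positivity) (invSq_jumpSet_le hL hlip hδ x)
      have hx2 : x ^ 2 ≤ 4 * R ^ 2 := by
        rw [← sq_abs]
        nlinarith [abs_nonneg x]
      calc _ ≤ 2 * L * (1 + 4 * R ^ 2) := by gcongr
        _ ≤ C := by rw [hC]; linarith
    · have hx2 : 1 ≤ x ^ 2 := by
        rw [← sq_abs]
        nlinarith
      have h := ENNReal.toReal_le_of_le_ofReal (by positivity)
        (invSq_jumpSet_le_tail hR hu0 hδ hx)
      calc _ ≤ 8 * R * δ / x ^ 2 * (1 + x ^ 2) := by gcongr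
        _ ≤ 8 * R * 1 / x ^ 2 * (x ^ 2 + x ^ 2) := by gcongr
        _ = 16 * R := by
            have : x ^ 2 ≠ 0 := by positivity
            rw [← two_mul, mul_one, div_mul_eq_mul_div, div_eq_iff this]
            ring
        _ ≤ C := by rw [hC]; have : 0 ≤ 2 * L * (1 + 4 * R ^ 2) := by positivity
                    linarith
  have hmajP : ∀ δ x, |deriv u x| * profile (u x / δ) ≤ C * (1 + x ^ 2)⁻¹ := by
    intro δ x
    rcases le_or_gt |x| R with hx | hx
    · have hx2 : x ^ 2 ≤ 4 * R ^ 2 := by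
        rw [← sq_abs]
        nlinarith [abs_nonneg x]
      have hp := profile_bound (u x / δ)
      rw [← div_eq_mul_inv, le_div_iff₀ (by positivity)]
      calc _ ≤ L * 2 * (1 + 4 * R ^ 2) := by
            gcongr
            · exact hp.1
            · exact hdL x
            · exact hp.2
        _ ≤ C := by rw [hC]; linarith
    · rw [hdu0 x hx, abs_zero, zero_mul]
      positivity
  have hint : Integrable fun x : ℝ => C * (1 + x ^ 2)⁻¹ := integrable_inv_one_add_sq.const_mul C
  have hGm : ∀ δ, Measurable fun x => invSq.real (jumpSet u δ x) := fun δ =>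
    (measurable_invSq_jumpSet hcu δ).ennreal_toReal
  have hPc : ∀ δ, Continuous fun x => |deriv u x| * profile (u x / δ) := fun δ =>
    hdu.abs.mul (profile_continuous.comp (hcu.div_const δ))
  have hP0 : ∀ δ x, 0 ≤ |deriv u x| * profile (u x / δ) := fun δ x =>
    mul_nonneg (abs_nonneg _) (profile_bound _).1
  have hle1 : ∀ᶠ δ : ℝ in 𝓝[>] 0, δ ≤ 1 :=
    (eventually_le_nhds one_pos).filter_mono nhdsWithin_le_nhds
  have hGint : ∀ δ > 0, δ ≤ 1 → Integrable fun x => invSq.real (jumpSet u δ x) :=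
    fun δ hδ hδ1 => hint.mono' (hGm δ).aestronglyMeasurable (ae_of_all _ fun x => by
      rw [Real.norm_eq_abs, abs_of_nonneg measureReal_nonneg]
      exact hmajG δ hδ hδ1 x)
  have hPint : ∀ δ, Integrable fun x => |deriv u x| * profile (u x / δ) :=
    fun δ => hint.mono' (hPc δ).aestronglyMeasurable (ae_of_all _ fun x => by
      rw [Real.norm_eq_abs, abs_of_nonneg (hP0 δ x)]
      exact hmajP δ x)
  have hdiff : Tendsto (fun δ : ℝ => ∫ x,
      (invSq.real (jumpSet u δ x) - |deriv u x| * profile (u x / δ))) (𝓝[>] 0) (𝓝 0) := by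
    have hz : ∫ _ : ℝ, (0 : ℝ) = 0 := integral_zero ℝ ℝ
    conv => arg 3; rw [← hz]
    refine tendsto_integral_filter_of_dominated_convergence (fun x => C * (1 + x ^ 2)⁻¹)
      (Eventually.of_forall fun δ => ((hGm δ).sub (hPc δ).measurable).aestronglyMeasurable)
      ?_ hint (ae_of_all _ fun x => tendsto_invSq_jumpSet hu x)
    filter_upwards [self_mem_nhdsWithin, hle1] with δ hδ hδ1
    refine ae_of_all _ fun x => ?_
    have g0 := measureReal_nonneg (μ := invSq) (s := jumpSet u δ x)
    rw [Real.norm_eq_abs, abs_le]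
    constructor <;> linarith [hmajG δ hδ hδ1 x, hmajP δ x, hP0 δ x]
  have havg := averaging hu (Q := fun s => profile s - 2 * Real.log 2)
    (profile_continuous.sub continuous_const)
    (fun s => by simp only [profile_periodic s])
    (by
      rw [intervalIntegral.integral_sub (profile_continuous.intervalIntegrable _ _)
        intervalIntegrable_const, integral_profile]
      simp) hR.le
  have habsint : Integrable fun x => |deriv u x| :=
    (hdu.integrable_of_hasCompactSupport hsupp.deriv).abs
  have hprof : ∀ δ : ℝ, ∫ x, |deriv u x| * profile (u x / δ)
      = (∫ x in (-R)..R, |deriv u x| * (profile (u x / δ) - 2 * Real.log 2))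
        + 2 * Real.log 2 * ∫ x, |deriv u x| := by
    intro δ
    -- `u'` is known to vanish only where `R < |x|`, so the endpoint `-R` is added first.
    have hcut : ∫ x in (-R)..R, |deriv u x| * (profile (u x / δ) - 2 * Real.log 2)
        = ∫ x, |deriv u x| * (profile (u x / δ) - 2 * Real.log 2) := by
      rw [intervalIntegral.integral_of_le (by linarith), ← integral_Icc_eq_integral_Ioc]
      refine setIntegral_eq_integral_of_forall_compl_eq_zero fun x hx => ?_
      rw [hdu0 x, abs_zero, zero_mul]
      by_contra h
      exact hx (abs_le.1 (not_lt.1 h))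
    rw [hcut, ← integral_const_mul, ← integral_add]
    · congr 1 with x
      ring
    · simp only [mul_sub]
      exact (hPint δ).sub (habsint.mul_const _)
    · exact habsint.const_mul _
  have hlim : Tendsto (fun δ : ℝ => ∫ x, invSq.real (jumpSet u δ x)) (𝓝[>] 0)
      (𝓝 (2 * Real.log 2 * ∫ x, |deriv u x|)) := by
    have h := hdiff.add (havg.add_const (2 * Real.log 2 * ∫ x, |deriv u x|))
    rw [zero_add, zero_add] at h
    refine h.congr' ?_
    filter_upwards [self_mem_nhdsWithin, hle1] with δ hδ hδ1
    rw [← hprof, integral_sub (hGint δ hδ hδ1) (hPint δ), sub_add_cancel]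
  refine ((ENNReal.continuous_ofReal.tendsto _).comp hlim).congr' ?_
  filter_upwards [self_mem_nhdsWithin, hle1] with δ hδ hδ1
  rw [Lambda1_segmentation hcu hδ, Function.comp_apply,
    ofReal_integral_eq_lintegral_ofReal (hGint δ hδ hδ1) (ae_of_all _ fun x => measureReal_nonneg)]
  exact lintegral_congr fun x => ofReal_measureReal (hfin δ hδ x)
end
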